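/- Let p > 0, n ∈ ℕ, and let β be a real number with -n < β < pn and β/p not a non-negative integer. Let γ_p(t) = ∫_ℝ e^{-|z|^p} e^{-itz} dz. Then for every ξ = (ξ₁,…,ξ_n) ∈ ℝⁿ with all coordinates nonzero, the Fourier transform of the function x ↦ (|x₁|^p + ⋯ + |x_n|^p)^{β/p} in the sense of tempered distributions coincides near ξ with the function ((|x₁|^p + ⋯ + |x_n|^p)^{β/p})^∧(ξ) = (p / Γ(-β/p)) ∫₀^∞ t^{n+β-1} ∏_{k=1}^n γ_p(t ξ_k) dt, and the integral on the right converges. -/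

import Mathlib

open MeasureTheory Metric
open scoped Real RealInnerProductSpace

noncomputable section

/-- The (non-unitary) Fourier transform `φ̂(ξ) = ∫_{ℝⁿ} φ(x) e^{-i(x,ξ)} dx`. -/
def ftNU {n : ℕ} (φ : EuclideanSpace ℝ (Fin n) → ℂ) (ξ : EuclideanSpace ℝ (Fin n)) : ℂ :=
  ∫ x, Complex.exp (-Complex.I * (⟪x, ξ⟫ : ℂ)) * φ x

/-- `γ_p`, the Fourier transform of `z ↦ exp(-|z|^p)` on `ℝ` (a real even function). -/
def gammaP (p t : ℝ) : ℝ :=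
  ∫ z : ℝ, Real.exp (-|z| ^ p) * Real.cos (t * z)

/-!
Write `S x = ∑ k, |x k| ^ p` and `s = β / p`. If `s < 0`, the Gamma integral
`Γ(-s) S ^ s = ∫₀^∞ u ^ (-1 - s) exp (-u S) du` reduces everything to the Fourier transform of
`exp (-u S)`, which for `u = t ^ (-p)` is the product `t ^ n ∏ γ_p (t ξ_k)`, and the substitution
`u = t ^ (-p)` gives the formula. For `s > 0` the Gamma integral still holds, up to sign, once
`exp (-u S)` is replaced by its Taylor remainder of order `⌈s⌉ ≤ n`. This adds multiples of the
moments `∫ S ^ j φ̂` with `j < n`, and all of these vanish: they are the Taylor coefficients at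
`u = 0` of `∫ exp (-u S) φ̂`, which is `O(u ^ n)` because rotating the contour in the integral
defining `γ_p` gives `γ_p t = O(|t| ^ (-1 - p))`. The constants in these bounds grow like powers of
`1 / |ξ_k|` near the coordinate hyperplanes, where `φ` is flat.
-/

section ExpNegRemainder

open Set Filter Topology

/-- The remainder of order `m` in the Taylor expansion of `v ↦ exp (-v)` at `0`, with the sign
that makes it nonnegative on `[0, ∞)`. Replacing `exp (-v)` by it extends the Gamma integral
beyond the half-plane in which that integral converges. -/
def expNegRemainder (m : ℕ) (v : ℝ) : ℝ :=
  (-1) ^ m * (Real.exp (-v) - ∑ j ∈ Finset.range m, (-v) ^ j / (j.factorial : ℝ))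

@[simp] lemma expNegRemainder_zero (v : ℝ) : expNegRemainder 0 v = Real.exp (-v) := by
  simp [expNegRemainder]

lemma expNegRemainder_succ (m : ℕ) (v : ℝ) :
    expNegRemainder (m + 1) v = v ^ m / (m.factorial : ℝ) - expNegRemainder m v := by
  have hsign : ((-1 : ℝ) ^ m) * (-1) ^ m = 1 := by rw [← mul_pow]; simp
  rw [expNegRemainder, expNegRemainder, Finset.sum_range_succ, neg_pow v m, pow_succ]
  linear_combination (v ^ m / (m.factorial : ℝ)) * hsign

lemma expNegRemainder_succ_apply_zero (m : ℕ) : expNegRemainder (m + 1) 0 = 0 := by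
  induction m with
  | zero => simp [expNegRemainder_succ]
  | succ m ih => rw [expNegRemainder_succ, ih]; simp

@[fun_prop]
lemma continuous_expNegRemainder (m : ℕ) : Continuous (expNegRemainder m) := by
  unfold expNegRemainder
  fun_prop

lemma hasDerivAt_expNegRemainder_succ (m : ℕ) (v : ℝ) :
    HasDerivAt (expNegRemainder (m + 1)) (expNegRemainder m v) v := by
  induction m generalizing v with
  | zero =>
    have hrec : expNegRemainder 1 = fun v ↦ 1 - Real.exp (-v) := by
      ext v; simp [expNegRemainder_succ]
    rw [hrec]
    exact ((hasDerivAt_neg v).exp.const_sub 1).congr_deriv (by simp)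
  | succ m ih =>
    rw [funext (expNegRemainder_succ (m + 1))]
    refine (((hasDerivAt_pow (m + 1) v).div_const _).sub (ih v)).congr_deriv ?_
    rw [expNegRemainder_succ, Nat.factorial_succ]
    push_cast
    field_simp

lemma expNegRemainder_nonneg (m : ℕ) {v : ℝ} (hv : 0 ≤ v) : 0 ≤ expNegRemainder m v := by
  induction m generalizing v with
  | zero => simpa using (Real.exp_pos _).le
  | succ m ih =>
    have hmono : MonotoneOn (expNegRemainder (m + 1)) (Ici 0) :=
      monotoneOn_of_hasDerivWithinAt_nonneg (convex_Ici 0)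
        (continuous_expNegRemainder _).continuousOn
        (fun x _ ↦ (hasDerivAt_expNegRemainder_succ m x).hasDerivWithinAt)
        (fun x hx ↦ ih (interior_subset hx))
    simpa only [expNegRemainder_succ_apply_zero] using hmono self_mem_Ici hv hv

lemma expNegRemainder_le_pow (m : ℕ) {v : ℝ} (hv : 0 ≤ v) : expNegRemainder m v ≤ v ^ m := by
  have hdiv : v ^ m / (m.factorial : ℝ) ≤ v ^ m :=
    div_le_self (pow_nonneg hv m) (mod_cast m.factorial_pos)
  linarith [expNegRemainder_succ m v, expNegRemainder_nonneg (m + 1) hv]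

lemma expNegRemainder_succ_le_pow (m : ℕ) {v : ℝ} (hv : 0 ≤ v) :
    expNegRemainder (m + 1) v ≤ v ^ m := by
  have hdiv : v ^ m / (m.factorial : ℝ) ≤ v ^ m :=
    div_le_self (pow_nonneg hv m) (mod_cast m.factorial_pos)
  linarith [expNegRemainder_succ m v, expNegRemainder_nonneg m hv]

lemma norm_rpow_mul_expNegRemainder_le {m k : ℕ} {u : ℝ} (hu : 0 < u)
    (hk : expNegRemainder m u ≤ u ^ k) (a : ℝ) :
    ‖u ^ a * expNegRemainder m u‖ ≤ u ^ (a + k) := by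
  rw [Real.rpow_add_natCast hu.ne', norm_mul, Real.norm_of_nonneg (Real.rpow_nonneg hu.le a),
    Real.norm_of_nonneg (expNegRemainder_nonneg m hu.le)]
  gcongr

lemma tendsto_rpow_mul_expNegRemainder_nhdsGT_zero {m : ℕ} {a : ℝ} (ha : 0 < a + m) :
    Tendsto (fun u ↦ u ^ a * expNegRemainder m u) (𝓝[>] 0) (𝓝 0) := by
  have hpow : Tendsto (fun u : ℝ ↦ u ^ (a + m)) (𝓝[>] 0) (𝓝 0) := by
    have := (Real.continuousAt_rpow_const 0 (a + m) (Or.inr ha.le)).tendsto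
    rw [Real.zero_rpow ha.ne'] at this
    exact this.mono_left nhdsWithin_le_nhds
  refine squeeze_zero_norm' ?_ hpow
  filter_upwards [self_mem_nhdsWithin] with u (hu : 0 < u)
  exact norm_rpow_mul_expNegRemainder_le hu (expNegRemainder_le_pow m hu.le) a

lemma tendsto_rpow_mul_expNegRemainder_succ_atTop {m : ℕ} {a : ℝ} (ha : a + m < 0) :
    Tendsto (fun u ↦ u ^ a * expNegRemainder (m + 1) u) atTop (𝓝 0) := by
  have hpow := tendsto_rpow_neg_atTop (y := -(a + m)) (by linarith)
  rw [neg_neg] at hpow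
  refine squeeze_zero_norm' ?_ hpow
  filter_upwards [eventually_gt_atTop 0] with u hu
  exact norm_rpow_mul_expNegRemainder_le hu (expNegRemainder_succ_le_pow m hu.le) a

lemma integrableOn_rpow_mul_expNegRemainder {m : ℕ} {s : ℝ} (hlow : ∀ j < m, (j : ℝ) < s)
    (hup : s < m) : IntegrableOn (fun u ↦ u ^ (-1 - s) * expNegRemainder m u) (Ioi 0) := by
  rcases m with _ | m
  · refine (Real.GammaIntegral_convergent (s := -s) (by simpa using hup)).congr_fun
      (fun u _ ↦ ?_) measurableSet_Ioi
    beta_reduce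
    rw [expNegRemainder_zero, mul_comm, neg_sub_comm]
  · have hms : (m : ℝ) < s := hlow m m.lt_succ_self
    push_cast at hup
    have hmeas (t : Set ℝ) : AEStronglyMeasurable
        (fun u : ℝ ↦ u ^ (-1 - s) * expNegRemainder (m + 1) u) (volume.restrict t) := by
      have := (continuous_expNegRemainder (m + 1)).measurable
      exact (by fun_prop : Measurable _).aestronglyMeasurable
    rw [← Ioc_union_Ioi_eq_Ioi (zero_le_one' ℝ)]
    refine IntegrableOn.union ?_ ?_
    · have hpow : IntegrableOn (fun u : ℝ ↦ u ^ (-1 - s + (m + 1 : ℕ))) (Ioc 0 1) := by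
        rw [← intervalIntegrable_iff_integrableOn_Ioc_of_le zero_le_one]
        exact intervalIntegral.intervalIntegrable_rpow' (by push_cast; linarith)
      exact hpow.mono' (hmeas _) <| ae_restrict_of_forall_mem measurableSet_Ioc fun u hu ↦
        norm_rpow_mul_expNegRemainder_le hu.1 (expNegRemainder_le_pow _ hu.1.le) _
    · have hpow : IntegrableOn (fun u : ℝ ↦ u ^ (-1 - s + m)) (Ioi 1) :=
        integrableOn_Ioi_rpow_of_lt (by linarith) one_pos
      refine hpow.mono' (hmeas _) <| ae_restrict_of_forall_mem measurableSet_Ioi fun u hu ↦ ?_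
      have hu0 : 0 < u := one_pos.trans hu
      exact norm_rpow_mul_expNegRemainder_le hu0 (expNegRemainder_succ_le_pow m hu0.le) _

lemma integral_rpow_mul_expNegRemainder {m : ℕ} {s : ℝ} (hlow : ∀ j < m, (j : ℝ) < s)
    (hup : s < m) :
    ∫ u in Ioi (0 : ℝ), u ^ (-1 - s) * expNegRemainder m u = (-1) ^ m * Real.Gamma (-s) := by
  induction m generalizing s with
  | zero =>
    rw [Real.Gamma_eq_integral (by simpa using hup), pow_zero, one_mul]
    refine setIntegral_congr_fun measurableSet_Ioi fun u _ ↦ ?_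
    rw [expNegRemainder_zero, mul_comm, neg_sub_comm]
  | succ m ih =>
    have hms : (m : ℝ) < s := hlow m m.lt_succ_self
    have hs : 0 < s := m.cast_nonneg.trans_lt hms
    have hint := integrableOn_rpow_mul_expNegRemainder hlow hup
    push_cast at hup
    have hlow' : ∀ j < m, (j : ℝ) < s - 1 := fun j hj ↦ by
      have : (j : ℝ) + 1 ≤ m := mod_cast hj
      linarith
    have hup' : s - 1 < m := by linarith
    have hint' := integrableOn_rpow_mul_expNegRemainder hlow' hup'
    specialize ih hlow' hup'
    rw [show -1 - (s - 1) = -s by ring] at hint' ih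
    rw [show -(s - 1) = -s + 1 by ring, Real.Gamma_add_one (by linarith)] at ih
    have hparts := integral_Ioi_mul_deriv_eq_deriv_mul (a := 0) (a' := 0) (b' := 0)
      (u := fun u : ℝ ↦ u ^ (-s)) (u' := fun u ↦ -s * u ^ (-1 - s))
      (v := expNegRemainder (m + 1)) (v' := expNegRemainder m)
      (fun x hx ↦ (Real.hasDerivAt_rpow_const (Or.inl (ne_of_gt hx))).congr_deriv
        (by rw [neg_sub_comm]))
      (fun x _ ↦ hasDerivAt_expNegRemainder_succ m x) hint'
      (IntegrableOn.congr_fun (hint.const_mul (-s)) (fun u _ ↦ by simp [mul_assoc])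
        measurableSet_Ioi)
      (tendsto_rpow_mul_expNegRemainder_nhdsGT_zero (by push_cast; linarith))
      (tendsto_rpow_mul_expNegRemainder_succ_atTop (by linarith))
    simp only [mul_assoc, integral_const_mul] at hparts
    refine mul_left_cancel₀ hs.ne' ?_
    rw [pow_succ]
    linear_combination ih - hparts

variable {m : ℕ} {s c : ℝ}

lemma rpow_mul_expNegRemainder_mul_eq (hc : 0 < c) {u : ℝ} (hu : 0 < u) :
    u ^ (-1 - s) * expNegRemainder m (u * c)
      = c ^ (1 + s) * ((c * u) ^ (-1 - s) * expNegRemainder m (c * u)) := by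
  have hcancel : c ^ (1 + s) * c ^ (-1 - s) = 1 := by
    rw [← Real.rpow_add hc]; ring_nf; exact Real.rpow_zero c
  rw [Real.mul_rpow hc.le hu.le, mul_comm u c]
  linear_combination -(u ^ (-1 - s) * expNegRemainder m (c * u)) * hcancel

lemma integrableOn_rpow_mul_expNegRemainder_mul (hlow : ∀ j < m, (j : ℝ) < s) (hup : s < m)
    (hc : 0 < c) : IntegrableOn (fun u ↦ u ^ (-1 - s) * expNegRemainder m (u * c)) (Ioi 0) := by
  have hscaled := (integrableOn_Ioi_comp_mul_left_iff
    (fun u ↦ u ^ (-1 - s) * expNegRemainder m u) 0 hc).2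
    (by simpa using integrableOn_rpow_mul_expNegRemainder hlow hup)
  exact IntegrableOn.congr_fun (hscaled.const_mul (c ^ (1 + s)))
    (fun u hu ↦ (rpow_mul_expNegRemainder_mul_eq hc hu).symm) measurableSet_Ioi

lemma integral_rpow_mul_expNegRemainder_mul (hlow : ∀ j < m, (j : ℝ) < s) (hup : s < m)
    (hc : 0 < c) :
    ∫ u in Ioi (0 : ℝ), u ^ (-1 - s) * expNegRemainder m (u * c)
      = c ^ s * ((-1) ^ m * Real.Gamma (-s)) := by
  rw [setIntegral_congr_fun measurableSet_Ioi
      fun u hu ↦ rpow_mul_expNegRemainder_mul_eq hc hu, integral_const_mul,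
    integral_comp_mul_left_Ioi (fun u ↦ u ^ (-1 - s) * expNegRemainder m u) _ hc, mul_zero,
    integral_rpow_mul_expNegRemainder hlow hup, smul_eq_mul, Real.rpow_add hc, Real.rpow_one]
  field_simp

end ExpNegRemainder

section MellinRegularization

open Set Filter Topology

variable {X E : Type*} [MeasurableSpace X] {μ : Measure X} [NormedAddCommGroup E]
  [NormedSpace ℝ E] {S : X → ℝ} {ψ : X → E}

lemma eq_zero_of_norm_pow_smul_le {c : E} {A : ℝ} {m : ℕ}
    (h : ∀ u ∈ Ioc (0 : ℝ) 1, ‖u ^ m • c‖ ≤ A * u ^ (m + 1)) : c = 0 := by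
  have hle : ∀ᶠ u in 𝓝[>] (0 : ℝ), ‖c‖ ≤ A * u := by
    filter_upwards [Ioc_mem_nhdsGT one_pos] with u hu
    have hum : 0 < u ^ m := pow_pos hu.1 m
    have hbound := h u hu
    rw [norm_smul, Real.norm_of_nonneg hum.le] at hbound
    refine le_of_mul_le_mul_left (hbound.trans_eq ?_) hum
    ring
  have hlim : Tendsto (fun u : ℝ ↦ A * u) (𝓝[>] 0) (𝓝 0) := by
    simpa using (tendsto_nhdsWithin_of_tendsto_nhds (continuous_const_mul A).continuousAt :
      Tendsto (fun u : ℝ ↦ A * u) (𝓝[>] 0) (𝓝 (A * 0)))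
  exact norm_le_zero_iff.1 (ge_of_tendsto hlim hle)

lemma norm_expNegRemainder_smul_le (m : ℕ) {v : ℝ} (hv : 0 ≤ v) (c : E) :
    ‖expNegRemainder m v • c‖ ≤ ‖v ^ m • c‖ := by
  rw [norm_smul, norm_smul, Real.norm_of_nonneg (expNegRemainder_nonneg m hv),
    Real.norm_of_nonneg (pow_nonneg hv m)]
  gcongr
  exact expNegRemainder_le_pow m hv

lemma integrable_expNegRemainder_smul {m : ℕ} (hS : ∀ x, 0 ≤ S x)
    (hSmeas : AEStronglyMeasurable S μ) (hψ : AEStronglyMeasurable ψ μ)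
    (hint : Integrable (fun x ↦ S x ^ m • ψ x) μ) {u : ℝ} (hu : 0 ≤ u) :
    Integrable (fun x ↦ expNegRemainder m (u * S x) • ψ x) μ := by
  refine (hint.smul (u ^ m)).mono ?_ (Eventually.of_forall fun x ↦ ?_)
  · exact ((continuous_expNegRemainder m).comp_aestronglyMeasurable
      (hSmeas.const_mul u)).smul hψ
  · have hle := norm_expNegRemainder_smul_le m (mul_nonneg hu (hS x)) (ψ x)
    rwa [mul_pow, mul_smul] at hle

lemma norm_integral_expNegRemainder_smul_le {m : ℕ} (hS : ∀ x, 0 ≤ S x)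
    (hint : Integrable (fun x ↦ S x ^ m • ψ x) μ) {u : ℝ} (hu : 0 ≤ u) :
    ‖∫ x, expNegRemainder m (u * S x) • ψ x ∂μ‖ ≤ u ^ m * ∫ x, ‖S x ^ m • ψ x‖ ∂μ := by
  rw [← integral_const_mul]
  refine norm_integral_le_of_norm_le (hint.norm.const_mul _) (Eventually.of_forall fun x ↦ ?_)
  refine (norm_expNegRemainder_smul_le m (mul_nonneg hu (hS x)) (ψ x)).trans_eq ?_
  rw [mul_pow, mul_smul, norm_smul, Real.norm_of_nonneg (pow_nonneg hu m)]

lemma integral_expNegRemainder_succ_smul {m : ℕ} (hS : ∀ x, 0 ≤ S x)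
    (hSmeas : AEStronglyMeasurable S μ) (hψ : AEStronglyMeasurable ψ μ)
    (hint : Integrable (fun x ↦ S x ^ m • ψ x) μ) {u : ℝ} (hu : 0 ≤ u) :
    ∫ x, expNegRemainder (m + 1) (u * S x) • ψ x ∂μ
      = u ^ m • (m.factorial : ℝ)⁻¹ • (∫ x, S x ^ m • ψ x ∂μ)
        - ∫ x, expNegRemainder m (u * S x) • ψ x ∂μ := by
  have hterm : Integrable (fun x ↦ u ^ m • (m.factorial : ℝ)⁻¹ • S x ^ m • ψ x) μ :=
    (hint.smul _).smul _
  rw [← integral_smul, ← integral_smul,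
    ← integral_sub hterm (integrable_expNegRemainder_smul hS hSmeas hψ hint hu)]
  refine integral_congr_ae (Eventually.of_forall fun x ↦ ?_)
  simp only [expNegRemainder_succ, sub_smul, smul_smul, mul_pow]
  ring_nf

/- Decay of order `u ^ n` as `u → 0` makes the moments `∫ S ^ j • ψ`, `j < n`, vanish one after
the other, so the Taylor polynomial of the exponential can be subtracted for free. -/
lemma integral_expNegRemainder_smul {n : ℕ} {K : ℝ} (hS : ∀ x, 0 ≤ S x)
    (hSmeas : AEStronglyMeasurable S μ)
    (hint : ∀ j ≤ n, Integrable (fun x ↦ S x ^ j • ψ x) μ)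
    (hdecay : ∀ u > 0, ‖∫ x, Real.exp (-(u * S x)) • ψ x ∂μ‖ ≤ K * u ^ n)
    {m : ℕ} (hm : m ≤ n) {u : ℝ} (hu : 0 < u) :
    ∫ x, expNegRemainder m (u * S x) • ψ x ∂μ
      = (-1 : ℝ) ^ m • ∫ x, Real.exp (-(u * S x)) • ψ x ∂μ := by
  have hψ : AEStronglyMeasurable ψ μ := by
    simpa using (hint 0 n.zero_le).aestronglyMeasurable
  induction m generalizing u with
  | zero => simp
  | succ m ih =>
    have hmn : m ≤ n := (Nat.le_succ m).trans hm
    have hrec {u : ℝ} (hu : 0 < u) := (ih hmn hu) ▸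
      integral_expNegRemainder_succ_smul hS hSmeas hψ (hint m hmn) hu.le
    have hmoment : (m.factorial : ℝ)⁻¹ • ∫ x, S x ^ m • ψ x ∂μ = 0 := by
      refine eq_zero_of_norm_pow_smul_le (m := m)
        (A := (∫ x, ‖S x ^ (m + 1) • ψ x‖ ∂μ) + K) fun u hu ↦ ?_
      have hK : 0 ≤ K := by simpa using (norm_nonneg _).trans (hdecay 1 one_pos)
      calc _ = ‖(∫ x, expNegRemainder (m + 1) (u * S x) • ψ x ∂μ)
              + (-1 : ℝ) ^ m • ∫ x, Real.exp (-(u * S x)) • ψ x ∂μ‖ := by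
            rw [hrec hu.1, sub_add_cancel]
        _ ≤ u ^ (m + 1) * (∫ x, ‖S x ^ (m + 1) • ψ x‖ ∂μ) + K * u ^ n := by
            refine norm_add_le_of_le
              (norm_integral_expNegRemainder_smul_le hS (hint _ hm) hu.1.le) ?_
            simpa [norm_smul] using hdecay u hu.1
        _ ≤ u ^ (m + 1) * (∫ x, ‖S x ^ (m + 1) • ψ x‖ ∂μ) + K * u ^ (m + 1) := by
            gcongr _ + K * ?_
            exact pow_le_pow_of_le_one hu.1.le hu.2 hm
        _ = _ := by ring
    rw [hrec hu, hmoment, smul_zero, zero_sub, pow_succ, mul_neg_one, neg_smul]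

lemma integrable_prod_rpow_mul_expNegRemainder_smul {m : ℕ} {s : ℝ}
    (hlow : ∀ j < m, (j : ℝ) < s) (hup : s < m)
    (hSmeas : AEStronglyMeasurable S μ) (hψ : AEStronglyMeasurable ψ μ)
    (hpos : ∀ᵐ x ∂μ, 0 < S x) (hint : Integrable (fun x ↦ S x ^ s • ψ x) μ) :
    Integrable (fun z : X × ℝ ↦ (z.2 ^ (-1 - s) * expNegRemainder m (z.2 * S z.1)) • ψ z.1)
      (μ.prod (volume.restrict (Ioi 0))) := by
  have hmeas : AEStronglyMeasurable
      (fun z : X × ℝ ↦ (z.2 ^ (-1 - s) * expNegRemainder m (z.2 * S z.1)) • ψ z.1)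
      (μ.prod (volume.restrict (Ioi 0))) :=
    ((Measurable.aestronglyMeasurable (by fun_prop)).mul
      ((continuous_expNegRemainder m).comp_aestronglyMeasurable
        (measurable_snd.aestronglyMeasurable.mul hSmeas.comp_fst))).smul hψ.comp_fst
  refine (integrable_prod_iff hmeas).2 ⟨?_, ?_⟩
  · filter_upwards [hpos] with x hx
    exact (integrableOn_rpow_mul_expNegRemainder_mul hlow hup hx).smul_const (ψ x)
  · refine (hint.norm.mul_const ((-1) ^ m * Real.Gamma (-s))).congr ?_
    filter_upwards [hpos] with x hx
    have hnorm : ∀ u ∈ Ioi (0 : ℝ),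
        ‖(u ^ (-1 - s) * expNegRemainder m (u * S x)) • ψ x‖
          = u ^ (-1 - s) * expNegRemainder m (u * S x) * ‖ψ x‖ := fun u hu ↦ by
      rw [norm_smul, Real.norm_of_nonneg (mul_nonneg (Real.rpow_nonneg (le_of_lt hu) _)
        (expNegRemainder_nonneg m (mul_nonneg (le_of_lt hu) hx.le)))]
    rw [setIntegral_congr_fun measurableSet_Ioi hnorm, integral_mul_const,
      integral_rpow_mul_expNegRemainder_mul hlow hup hx, norm_smul,
      Real.norm_of_nonneg (Real.rpow_nonneg hx.le s)]
    ring

theorem Gamma_smul_integral_rpow_smul [SFinite μ] [CompleteSpace E] {n : ℕ} {s K : ℝ}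
    (hs : ∀ j : ℕ, s ≠ j) (hsn : s < n) (hS : ∀ x, 0 ≤ S x)
    (hSmeas : AEStronglyMeasurable S μ) (hpos : ∀ᵐ x ∂μ, 0 < S x)
    (hrpow : Integrable (fun x ↦ S x ^ s • ψ x) μ)
    (hpow : ∀ j ≤ n, Integrable (fun x ↦ S x ^ j • ψ x) μ)
    (hdecay : ∀ u > 0, ‖∫ x, Real.exp (-(u * S x)) • ψ x ∂μ‖ ≤ K * u ^ n) :
    Real.Gamma (-s) • ∫ x, S x ^ s • ψ x ∂μ
      = ∫ u in Ioi (0 : ℝ), u ^ (-1 - s) • ∫ x, Real.exp (-(u * S x)) • ψ x ∂μ := by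
  have hψ : AEStronglyMeasurable ψ μ := by
    simpa using (hpow 0 n.zero_le).aestronglyMeasurable
  set m := ⌈s⌉₊
  have hlow : ∀ j < m, (j : ℝ) < s := fun j ↦ Nat.lt_ceil.1
  have hup : s < m := (Nat.le_ceil s).lt_of_ne (hs m)
  have hmn : m ≤ n := Nat.ceil_le.2 hsn.le
  have hsign : (-1 : ℝ) ^ m * (-1) ^ m = 1 := by rw [← mul_pow]; simp
  calc Real.Gamma (-s) • ∫ x, S x ^ s • ψ x ∂μ
      = (-1 : ℝ) ^ m • ∫ x, (S x ^ s * ((-1) ^ m * Real.Gamma (-s))) • ψ x ∂μ := by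
        rw [← integral_smul, ← integral_smul]
        refine integral_congr_ae (Eventually.of_forall fun x ↦ ?_)
        simp only [smul_smul]
        congr 1
        linear_combination -(S x ^ s * Real.Gamma (-s)) * hsign
    _ = (-1 : ℝ) ^ m • ∫ x, (∫ u in Ioi (0 : ℝ),
          (u ^ (-1 - s) * expNegRemainder m (u * S x)) • ψ x) ∂μ := by
        congr 1
        refine integral_congr_ae ?_
        filter_upwards [hpos] with x hx
        rw [integral_smul_const, integral_rpow_mul_expNegRemainder_mul hlow hup hx]
    _ = (-1 : ℝ) ^ m • ∫ u in Ioi (0 : ℝ), (∫ x,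
          (u ^ (-1 - s) * expNegRemainder m (u * S x)) • ψ x ∂μ) := by
        rw [integral_integral_swap (integrable_prod_rpow_mul_expNegRemainder_smul hlow hup
          hSmeas hψ hpos hrpow)]
    _ = _ := by
        rw [← integral_smul]
        refine setIntegral_congr_fun measurableSet_Ioi fun u hu ↦ ?_
        simp only [mul_smul, integral_smul,
          integral_expNegRemainder_smul hS hSmeas hpow hdecay hmn hu]
        rw [smul_comm (u ^ _), smul_smul, hsign, one_smul]

end MellinRegularization

section RotationOfContour

open Set Filter Topology Complex

lemma integral_exp_smul_comp_exp {E : Type*} [NormedAddCommGroup E] [NormedSpace ℝ E]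
    (g : ℝ → E) : ∫ x : ℝ, Real.exp x • g (Real.exp x) = ∫ y in Ioi (0 : ℝ), g y := by
  rw [← Real.range_exp, ← image_univ, integral_image_eq_integral_abs_deriv_smul MeasurableSet.univ
    (fun x _ ↦ (Real.hasDerivAt_exp x).hasDerivWithinAt) Real.exp_injective.injOn]
  simp

lemma integrable_exp_smul_comp_exp_iff {E : Type*} [NormedAddCommGroup E] [NormedSpace ℝ E]
    {g : ℝ → E} :
    Integrable (fun x : ℝ ↦ Real.exp x • g (Real.exp x)) ↔ IntegrableOn g (Ioi 0) := by
  rw [← Real.range_exp, ← image_univ, integrableOn_image_iff_integrableOn_abs_deriv_smul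
    MeasurableSet.univ (fun x _ ↦ (Real.hasDerivAt_exp x).hasDerivWithinAt)
    Real.exp_injective.injOn]
  simp

variable {E : Type*} [NormedAddCommGroup E] [NormedSpace ℂ E]

theorem integral_eq_integral_add_mul_I {f : ℂ → E} {g : ℝ → ℝ} {b : ℝ}
    (hf : DifferentiableOn ℂ f (im ⁻¹' uIcc 0 b))
    (hfg : ∀ x : ℝ, ∀ y ∈ uIcc 0 b, ‖f (x + y * I)‖ ≤ g x) (hg : Integrable g)
    (hbot : Tendsto g atBot (𝓝 0)) (htop : Tendsto g atTop (𝓝 0)) :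
    ∫ x : ℝ, f x = ∫ x : ℝ, f (x + b * I) := by
  have hrow {y : ℝ} (hy : y ∈ uIcc 0 b) : Integrable fun x : ℝ ↦ f (x + y * I) := by
    refine hg.mono' (Continuous.aestronglyMeasurable ?_) (Eventually.of_forall (hfg · y hy))
    exact hf.continuousOn.comp_continuous (by fun_prop) fun x ↦ by simpa using hy
  have hlim {y : ℝ} (hy : y ∈ uIcc 0 b) :
      Tendsto (fun T : ℝ ↦ ∫ x in -T..T, f (x + y * I)) atTop (𝓝 (∫ x : ℝ, f (x + y * I))) :=
    intervalIntegral_tendsto_integral (hrow hy) tendsto_neg_atTop_atBot tendsto_id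
  have hside {l : Filter ℝ} (hl : Tendsto g l (𝓝 0)) :
      Tendsto (fun T : ℝ ↦ I • ∫ y in (0 : ℝ)..b, f (T + y * I)) l (𝓝 0) := by
    refine squeeze_zero_norm (fun T ↦ ?_) (by simpa using hl.mul_const |b|)
    rw [norm_smul, norm_I, one_mul]
    simpa using intervalIntegral.norm_integral_le_of_norm_le_const fun y hy ↦
      hfg T y (uIoc_subset_uIcc hy)
  have hrect (T : ℝ) := integral_boundary_rect_eq_zero_of_differentiableOn f (-T : ℝ) (T + b * I)
    (hf.mono fun z hz ↦ by simpa using hz.2)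
  simp only [ofReal_re, ofReal_im, add_re, add_im, mul_re, mul_im, I_re, I_im, mul_zero, mul_one,
    sub_zero, add_zero, zero_add] at hrect
  have hzero := ((hlim left_mem_uIcc).sub (hlim right_mem_uIcc)).add (hside htop) |>.sub
    ((hside hbot).comp tendsto_neg_atTop_atBot)
  simp only [Function.comp_def, hrect] at hzero
  rw [sub_zero, add_zero, ofReal_zero] at hzero
  simpa using sub_eq_zero.1 (tendsto_nhds_unique hzero tendsto_const_nhds)

lemma exp_add_mul_I_eq (x φ : ℝ) : cexp (x + φ * I) = (Real.exp x : ℂ) * cexp (φ * I) := by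
  rw [Complex.exp_add, ofReal_exp]

theorem integral_Ioi_eq_smul_integral_ray {F : ℂ → E} {g : ℝ → ℝ} {θ : ℝ} (hθ : |θ| < π)
    (hF : DifferentiableOn ℂ F slitPlane)
    (hFg : ∀ y > 0, ∀ φ ∈ uIcc 0 θ, ‖F ((y : ℝ) * cexp (φ * I))‖ ≤ g y)
    (hg : IntegrableOn g (Ioi 0)) (hzero : Tendsto (fun y ↦ y * g y) (𝓝[>] 0) (𝓝 0))
    (htop : Tendsto (fun y ↦ y * g y) atTop (𝓝 0)) :
    ∫ y in Ioi (0 : ℝ), F y = cexp (θ * I) • ∫ y in Ioi (0 : ℝ), F (y * cexp (θ * I)) := by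
  have hslit : MapsTo cexp (im ⁻¹' uIcc 0 θ) slitPlane := fun z hz ↦ by
    have hz' : |z.im| < π :=
      (by simpa using abs_sub_left_of_mem_uIcc hz : |z.im| ≤ |θ|).trans_lt hθ
    rw [abs_lt] at hz'
    have harg := congrArg im (log_exp hz'.1 hz'.2.le)
    rw [log_im] at harg
    exact mem_slitPlane_iff_arg.2 ⟨harg ▸ hz'.2.ne, exp_ne_zero z⟩
  have hshift := integral_eq_integral_add_mul_I (f := fun z ↦ cexp z • F (cexp z))
    (g := fun x ↦ Real.exp x * g (Real.exp x)) (b := θ)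
    (differentiable_exp.differentiableOn.smul (hF.comp differentiable_exp.differentiableOn hslit))
    (fun x φ hφ ↦ by
      rw [exp_add_mul_I_eq, norm_smul, norm_mul, norm_exp_ofReal_mul_I, mul_one, norm_real,
        Real.norm_of_nonneg (Real.exp_pos x).le]
      gcongr
      exact hFg _ (Real.exp_pos x) φ hφ)
    (integrable_exp_smul_comp_exp_iff.2 hg) (hzero.comp Real.tendsto_exp_atBot_nhdsGT)
    (htop.comp Real.tendsto_exp_atTop)
  calc ∫ y in Ioi (0 : ℝ), F y
      = ∫ x : ℝ, cexp x • F (cexp x) := by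
        rw [← integral_exp_smul_comp_exp]
        simp only [← ofReal_exp, coe_smul]
    _ = ∫ x : ℝ, cexp (x + θ * I) • F (cexp (x + θ * I)) := hshift
    _ = cexp (θ * I) • ∫ x : ℝ, Real.exp x • F (Real.exp x * cexp (θ * I)) := by
        rw [← integral_smul]
        simp only [exp_add_mul_I_eq, mul_smul, coe_smul, smul_comm (Real.exp _)]
    _ = _ := by rw [integral_exp_smul_comp_exp fun y ↦ F (y * cexp (θ * I))]

lemma norm_exp_neg_sub_one_le {w : ℂ} (hw : 0 ≤ w.re) : ‖cexp (-w) - 1‖ ≤ ‖w‖ := by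
  have hconv : Convex ℝ {z : ℂ | z.re ≤ 0} := convex_halfSpace_re_le 0
  simpa using hconv.norm_image_sub_le_of_norm_deriv_le (f := cexp) (C := 1) (x := 0) (y := -w)
    (fun z _ ↦ differentiableAt_exp) (fun z hz ↦ by simpa [norm_exp] using hz) (by simp)
    (by simpa using hw)

end RotationOfContour

section GammaP

open Set Filter Topology

variable {p : ℝ}

lemma integrable_comp_abs_of_integrableOn_Ioi {E : Type*} [NormedAddCommGroup E] {f : ℝ → E}
    (hf : IntegrableOn f (Ioi 0)) : Integrable fun z ↦ f |z| := by
  have hpos : IntegrableOn (fun z : ℝ ↦ f |z|) (Ioi 0) :=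
    hf.congr_fun (fun z hz ↦ by rw [abs_of_pos hz]) measurableSet_Ioi
  have hneg : IntegrableOn (fun z : ℝ ↦ f |z|) (Iic 0) := by
    rw [integrableOn_Iic_iff_integrableOn_Iio]
    simpa using hpos.comp_neg
  rw [← integrableOn_univ, ← Iic_union_Ioi (a := (0 : ℝ))]
  exact hneg.union hpos

lemma integrable_exp_neg_abs_rpow (hp : 0 < p) : Integrable fun z : ℝ ↦ Real.exp (-|z| ^ p) := by
  have hhalf := integrableOn_rpow_mul_exp_neg_rpow (s := 0) (by norm_num) hp
  simp only [Real.rpow_zero, one_mul] at hhalf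
  exact integrable_comp_abs_of_integrableOn_Ioi hhalf

lemma gammaP_abs (p t : ℝ) : gammaP p |t| = gammaP p t := by
  rcases abs_choice t with ht | ht <;> simp [gammaP, ht]

lemma norm_exp_neg_abs_rpow_mul_cos_le (t z : ℝ) :
    ‖Real.exp (-|z| ^ p) * Real.cos (t * z)‖ ≤ Real.exp (-|z| ^ p) := by
  rw [norm_mul, Real.norm_of_nonneg (Real.exp_pos _).le]
  exact mul_le_of_le_one_right (Real.exp_pos _).le (Real.abs_cos_le_one _)

lemma abs_gammaP_le (hp : 0 < p) (t : ℝ) : |gammaP p t| ≤ ∫ z : ℝ, Real.exp (-|z| ^ p) :=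
  norm_integral_le_of_norm_le (integrable_exp_neg_abs_rpow hp)
    (Eventually.of_forall (norm_exp_neg_abs_rpow_mul_cos_le t))

lemma continuous_gammaP (hp : 0 < p) : Continuous (gammaP p) := by
  refine continuous_of_dominated (fun t ↦ Measurable.aestronglyMeasurable (by fun_prop))
    (fun t ↦ Eventually.of_forall (norm_exp_neg_abs_rpow_mul_cos_le t))
    (integrable_exp_neg_abs_rpow hp) (Eventually.of_forall fun z ↦ by fun_prop)

open Complex

lemma ofReal_mul_exp_mul_I_cpow {y φ : ℝ} (hy : 0 < y) (hφ : φ ∈ Ioc (-π) π) (p : ℝ) :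
    ((y : ℂ) * cexp (φ * I)) ^ (p : ℂ) = (y ^ p : ℝ) * cexp ((p * φ : ℝ) * I) := by
  have hpolar : (y : ℂ) * cexp (φ * I) = cexp (Real.log y + φ * I) := by
    rw [exp_add_mul_I_eq, Real.exp_log hy]
  rw [hpolar, cpow_def_of_ne_zero (exp_ne_zero _), log_exp (by simpa using hφ.1)
    (by simpa using hφ.2), Real.rpow_def_of_pos hy, ← exp_add_mul_I_eq]
  congr 1
  push_cast
  ring

lemma norm_exp_neg_cpow_add_eq {y φ : ℝ} (hy : 0 < y) (hφ : φ ∈ Ioc (-π) π) (p t : ℝ) :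
    ‖cexp (-((y : ℂ) * cexp (φ * I)) ^ (p : ℂ) + I * t * (y * cexp (φ * I)))‖
      = Real.exp (-(y ^ p * Real.cos (p * φ)) - t * y * Real.sin φ) := by
  rw [norm_exp, ofReal_mul_exp_mul_I_cpow hy hφ]
  congr 1
  simp only [add_re, neg_re, mul_re, mul_im, ofReal_re, ofReal_im, I_re, I_im, exp_ofReal_mul_I_re,
    exp_ofReal_mul_I_im]
  ring

lemma norm_exp_neg_cpow_add_le {y φ t : ℝ} (hy : 0 < y) (hφ : φ ∈ Icc 0 π) (ht : 0 ≤ t) {c : ℝ}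
    (hc : c ≤ Real.cos (p * φ)) :
    ‖cexp (-((y : ℂ) * cexp (φ * I)) ^ (p : ℂ) + I * t * (y * cexp (φ * I)))‖
      ≤ Real.exp (-c * y ^ p) := by
  rw [norm_exp_neg_cpow_add_eq hy ⟨by linarith [hφ.1, Real.pi_pos], hφ.2⟩, Real.exp_le_exp]
  have hcos := mul_le_mul_of_nonneg_left hc (Real.rpow_nonneg hy.le p)
  have hsin := mul_nonneg (mul_nonneg ht hy.le) (Real.sin_nonneg_of_mem_Icc hφ)
  linarith

lemma integrableOn_exp_neg_mul_rpow (hp : 0 < p) {c : ℝ} (hc : 0 < c) :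
    IntegrableOn (fun y : ℝ ↦ Real.exp (-c * y ^ p)) (Ioi 0) := by
  simpa using integrableOn_rpow_mul_exp_neg_mul_rpow (s := 0) (by norm_num) hp hc

lemma tendsto_mul_exp_neg_mul_rpow_nhdsGT_zero (hp : 0 < p) (c : ℝ) :
    Tendsto (fun y : ℝ ↦ y * Real.exp (-c * y ^ p)) (𝓝[>] 0) (𝓝 0) := by
  have hcont : Continuous fun y : ℝ ↦ y * Real.exp (-c * y ^ p) := by
    have := Real.continuous_rpow_const hp.le
    fun_prop
  simpa using (hcont.tendsto 0).mono_left nhdsWithin_le_nhds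

lemma tendsto_mul_exp_neg_mul_rpow_atTop (hp : 0 < p) {c : ℝ} (hc : 0 < c) :
    Tendsto (fun y : ℝ ↦ y * Real.exp (-c * y ^ p)) atTop (𝓝 0) := by
  refine ((tendsto_rpow_mul_exp_neg_mul_atTop_nhds_zero p⁻¹ c hc).comp
    (tendsto_rpow_atTop hp)).congr' ?_
  filter_upwards [eventually_ge_atTop 0] with y hy
  rw [Function.comp_apply, Real.rpow_rpow_inv hy hp.ne']

lemma integrableOn_exp_neg_cpow_add (hp : 0 < p) {t φ : ℝ} (ht : 0 ≤ t) (hφ : φ ∈ Icc 0 π)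
    (hcos : 0 < Real.cos (p * φ)) :
    IntegrableOn (fun y : ℝ ↦ cexp (-((y : ℂ) * cexp (φ * I)) ^ (p : ℂ)
      + I * t * (y * cexp (φ * I)))) (Ioi 0) :=
  (integrableOn_exp_neg_mul_rpow hp hcos).mono' (Measurable.aestronglyMeasurable (by fun_prop))
    (ae_restrict_of_forall_mem measurableSet_Ioi fun _ hy ↦
      norm_exp_neg_cpow_add_le hy hφ ht le_rfl)

lemma gammaP_eq_two_mul_re_integral_Ioi (hp : 0 < p) {t : ℝ} (ht : 0 ≤ t) :
    gammaP p t = 2 * (∫ y in Ioi (0 : ℝ), cexp (-(y : ℂ) ^ (p : ℂ) + I * t * y)).re := by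
  have hint : IntegrableOn (fun y : ℝ ↦ cexp (-(y : ℂ) ^ (p : ℂ) + I * t * y)) (Ioi 0) := by
    simpa using integrableOn_exp_neg_cpow_add hp ht (left_mem_Icc.2 Real.pi_pos.le) (by simp)
  calc gammaP p t = ∫ z : ℝ, Real.exp (-|z| ^ p) * Real.cos (t * |z|) := by
        refine integral_congr_ae (Eventually.of_forall fun z ↦ ?_)
        rcases abs_choice z with hz | hz <;> simp [hz]
    _ = 2 * ∫ y in Ioi (0 : ℝ), Real.exp (-y ^ p) * Real.cos (t * y) :=
        integral_comp_abs (f := fun y ↦ Real.exp (-y ^ p) * Real.cos (t * y))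
    _ = 2 * ∫ y in Ioi (0 : ℝ), (cexp (-(y : ℂ) ^ (p : ℂ) + I * t * y)).re := by
        congr 1
        refine setIntegral_congr_fun measurableSet_Ioi fun y hy ↦ ?_
        simp [exp_re, ← ofReal_cpow (le_of_lt hy)]
    _ = _ := congrArg (2 * ·) (reCLM.integral_comp_comm hint)

lemma integral_exp_neg_cpow_eq_mul_integral_ray (hp : 0 < p) {t θ : ℝ} (ht : 0 ≤ t)
    (hθ0 : 0 ≤ θ) (hθπ : θ < π) (hpθ : p * θ < π / 2) :
    ∫ y in Ioi (0 : ℝ), cexp (-(y : ℂ) ^ (p : ℂ) + I * t * y)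
      = cexp (θ * I) * ∫ y in Ioi (0 : ℝ), cexp (-((y : ℂ) * cexp (θ * I)) ^ (p : ℂ)
          + I * t * (y * cexp (θ * I))) := by
  have hcos : 0 < Real.cos (p * θ) := Real.cos_pos_of_mem_Ioo
    ⟨by nlinarith [Real.pi_pos], hpθ⟩
  refine integral_Ioi_eq_smul_integral_ray (g := fun y ↦ Real.exp (-Real.cos (p * θ) * y ^ p))
    (F := fun z ↦ cexp (-z ^ (p : ℂ) + I * t * z))
    (abs_lt.2 ⟨by linarith [Real.pi_pos], hθπ⟩) ?_ ?_ (integrableOn_exp_neg_mul_rpow hp hcos) ?_ ?_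
  · exact fun z hz ↦ DifferentiableAt.differentiableWithinAt (by fun_prop (disch := assumption))
  · intro y hy φ hφ
    rw [uIcc_of_le hθ0] at hφ
    refine norm_exp_neg_cpow_add_le hy ⟨hφ.1, hφ.2.trans hθπ.le⟩ ht ?_
    exact Real.cos_le_cos_of_nonneg_of_le_pi (mul_nonneg hp.le hφ.1)
      (by linarith [Real.pi_pos]) (by gcongr; exact hφ.2)
  · exact tendsto_mul_exp_neg_mul_rpow_nhdsGT_zero hp _
  · exact tendsto_mul_exp_neg_mul_rpow_atTop hp hcos

lemma re_mul_exp_mul_I_neg {t θ : ℝ} (ht : 0 < t) (hθ : 0 < Real.sin θ) :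
    (I * t * cexp (θ * I)).re < 0 := by
  simp only [mul_re, mul_im, I_re, I_im, ofReal_re, ofReal_im, exp_ofReal_mul_I_re,
    exp_ofReal_mul_I_im]
  linarith [mul_pos ht hθ]

lemma re_exp_mul_I_mul_integral_ray {t θ : ℝ} (ht : 0 < t) (hθ : 0 < Real.sin θ) :
    (cexp (θ * I) * ∫ y in Ioi (0 : ℝ), cexp (I * t * cexp (θ * I) * y)).re = 0 := by
  have ht' : (t : ℂ) ≠ 0 := mod_cast ht.ne'
  have hval : cexp (θ * I) * ∫ y in Ioi (0 : ℝ), cexp (I * t * cexp (θ * I) * y)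
      = (t⁻¹ : ℝ) * I := by
    rw [integral_exp_mul_complex_Ioi (re_mul_exp_mul_I_neg ht hθ)]
    push_cast
    field_simp
    simp
  simp [hval]

lemma norm_exp_neg_cpow_add_sub_exp_le {y θ : ℝ} (hy : 0 < y) (hθ : θ ∈ Ioc (-π) π)
    (hcos : 0 ≤ Real.cos (p * θ)) (t : ℝ) :
    ‖cexp (-((y : ℂ) * cexp (θ * I)) ^ (p : ℂ) + I * t * (y * cexp (θ * I)))
        - cexp (I * t * cexp (θ * I) * y)‖
      ≤ y ^ p * Real.exp (-(t * Real.sin θ * y)) := by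
  rw [ofReal_mul_exp_mul_I_cpow hy hθ]
  set w : ℂ := (y ^ p : ℝ) * cexp ((p * θ : ℝ) * I)
  have hw : ‖w‖ = y ^ p := by
    rw [norm_mul, norm_exp_ofReal_mul_I, mul_one, norm_real,
      Real.norm_of_nonneg (Real.rpow_nonneg hy.le p)]
  have hre : 0 ≤ w.re := by
    rw [re_ofReal_mul, exp_ofReal_mul_I_re]
    exact mul_nonneg (Real.rpow_nonneg hy.le p) hcos
  have hexp : ‖cexp (I * t * cexp (θ * I) * y)‖ = Real.exp (-(t * Real.sin θ * y)) := by
    rw [norm_exp]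
    congr 1
    simp only [mul_re, mul_im, I_re, I_im, ofReal_re, ofReal_im, exp_ofReal_mul_I_re,
      exp_ofReal_mul_I_im]
    ring
  calc _ = ‖(cexp (-w) - 1) * cexp (I * t * cexp (θ * I) * y)‖ := by
        rw [Complex.exp_add]
        ring_nf
    _ ≤ y ^ p * Real.exp (-(t * Real.sin θ * y)) := by
        rw [norm_mul, hexp, ← hw]
        gcongr
        exact norm_exp_neg_sub_one_le hre

/- The ray at angle `θ = π / (2 (p + 1))` makes `exp (-z ^ p)` and `exp (itz)` decay at the same
angular rate `cos (p θ) = sin θ > 0`. Replacing `exp (-z ^ p)` by `1` would give the purely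
imaginary value `i / t`, so only the difference `exp (-z ^ p) - 1 = O(z ^ p)` is seen. -/
lemma abs_gammaP_le_mul_rpow (hp : 0 < p) {t : ℝ} (ht : 0 < t) :
    |gammaP p t|
      ≤ 2 * ((1 / (t * Real.sin (π / (2 * (p + 1))))) ^ (p + 1) * Real.Gamma (p + 1)) := by
  set θ := π / (2 * (p + 1)) with hθ
  have hθ0 : 0 < θ := by positivity
  have hpθ : p * θ = π / 2 - θ := by rw [hθ]; field_simp; ring
  have hθπ : θ < π / 2 := by linarith [mul_pos hp hθ0]
  have hsin : 0 < Real.sin θ := Real.sin_pos_of_pos_of_lt_pi hθ0 (by linarith)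
  have hcos : 0 < Real.cos (p * θ) := by rwa [hpθ, Real.cos_pi_div_two_sub]
  have hint := integrableOn_exp_neg_cpow_add hp ht.le ⟨hθ0.le, by linarith⟩ hcos
  have hint' := integrableOn_exp_mul_complex_Ioi (re_mul_exp_mul_I_neg ht hsin) 0
  have hdiff := congrArg re (mul_sub (cexp (θ * I)) (∫ y in Ioi (0 : ℝ),
    cexp (-((y : ℂ) * cexp (θ * I)) ^ (p : ℂ) + I * t * (y * cexp (θ * I))))
    (∫ y in Ioi (0 : ℝ), cexp (I * t * cexp (θ * I) * y)))
  rw [sub_re, re_exp_mul_I_mul_integral_ray ht hsin, sub_zero, ← integral_sub hint hint'] at hdiff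
  rw [gammaP_eq_two_mul_re_integral_Ioi hp ht.le, integral_exp_neg_cpow_eq_mul_integral_ray hp
    ht.le hθ0.le (by linarith) (by linarith), ← hdiff, abs_mul, abs_two]
  gcongr
  refine (abs_re_le_norm _).trans ?_
  have hgamma := Real.integral_rpow_mul_exp_neg_mul_Ioi (a := p + 1) (by linarith)
    (mul_pos ht hsin)
  rw [norm_mul, norm_exp_ofReal_mul_I, one_mul, ← hgamma, add_sub_cancel_right]
  refine norm_integral_le_of_norm_le ?_ (ae_restrict_of_forall_mem measurableSet_Ioi fun y hy ↦ ?_)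
  · have hmajorant : IntegrableOn (fun y ↦ y ^ p * Real.exp (-(t * Real.sin θ * y))) (Ioi 0) := by
      simpa using integrableOn_rpow_mul_exp_neg_mul_rpow (by linarith : -1 < p) one_pos
        (mul_pos ht hsin)
    exact hmajorant
  · exact norm_exp_neg_cpow_add_sub_exp_le hy ⟨by linarith, by linarith⟩ hcos.le t

lemma le_max_mul_one_add_rpow_neg {x D M b t : ℝ} (hb : 0 ≤ b) (ht : 0 ≤ t) (hD : 0 ≤ D)
    (hxD : x ≤ D) (hxM : 0 < t → x ≤ M * t ^ (-b)) :
    x ≤ max D M * 2 ^ b * (1 + t) ^ (-b) := by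
  have hmax : 0 ≤ max D M := hD.trans (le_max_left D M)
  have hhalf : (2 : ℝ) ^ b * (1 + t) ^ (-b) = ((1 + t) / 2) ^ (-b) := by
    rw [Real.div_rpow (by linarith) two_pos.le, Real.rpow_neg two_pos.le, div_inv_eq_mul, mul_comm]
  rw [mul_assoc, hhalf]
  rcases le_total t 1 with ht1 | ht1
  · have hge : 1 ≤ ((1 + t) / 2) ^ (-b) :=
      Real.one_le_rpow_of_pos_of_le_one_of_nonpos (by linarith) (by linarith) (by linarith)
    exact hxD.trans ((le_max_left D M).trans (le_mul_of_one_le_right hmax hge))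
  · have ht0 : 0 < t := by linarith
    calc x ≤ M * t ^ (-b) := hxM ht0
      _ ≤ max D M * ((1 + t) / 2) ^ (-b) := by
        gcongr ?_ * ?_
        · exact le_max_right D M
        · exact Real.rpow_le_rpow_of_nonpos (by linarith) (by linarith) (by linarith)

theorem exists_abs_gammaP_le_mul_one_add_abs_rpow (hp : 0 < p) :
    ∃ C, 0 ≤ C ∧ ∀ t, |gammaP p t| ≤ C * (1 + |t|) ^ (-(1 + p)) := by
  set D := ∫ z : ℝ, Real.exp (-|z| ^ p)
  set M := 2 * ((1 / Real.sin (π / (2 * (p + 1)))) ^ (p + 1) * Real.Gamma (p + 1))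
  have hD : 0 ≤ D := (abs_nonneg _).trans (abs_gammaP_le hp 0)
  have hsin : 0 ≤ Real.sin (π / (2 * (p + 1))) := by
    refine Real.sin_nonneg_of_nonneg_of_le_pi (by positivity) (div_le_self Real.pi_pos.le ?_)
    linarith
  refine ⟨max D M * 2 ^ (1 + p), mul_nonneg (hD.trans (le_max_left D M)) (by positivity),
    fun t ↦ le_max_mul_one_add_rpow_neg (by linarith) (abs_nonneg t) hD (abs_gammaP_le hp t)
      fun ht ↦ ?_⟩
  rw [← gammaP_abs]
  refine (abs_gammaP_le_mul_rpow hp ht).trans_eq ?_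
  rw [one_div, mul_inv, Real.mul_rpow (by positivity) (by positivity), Real.inv_rpow ht.le,
    ← Real.rpow_neg ht.le, add_comm 1 p, ← one_div]
  ring

end GammaP

section Decay

variable {V F : Type*} [NormedAddCommGroup V] [NormedSpace ℝ V] [NormedAddCommGroup F]
  [NormedSpace ℝ F]

lemma exists_norm_schwartz_le_mul_one_add_norm_pow (φ : SchwartzMap V F) (M : ℕ) :
    ∃ C, 0 ≤ C ∧ ∀ x, ‖φ x‖ ≤ C * ((1 + ‖x‖) ^ M)⁻¹ := by
  refine ⟨2 ^ M * (Finset.Iic (M, 0)).sup (fun m ↦ SchwartzMap.seminorm ℝ m.1 m.2) φ,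
    by positivity, fun x ↦ ?_⟩
  rw [← div_eq_mul_inv, le_div_iff₀ (by positivity), mul_comm]
  simpa using SchwartzMap.one_add_le_sup_seminorm_apply (𝕜 := ℝ) (m := (M, 0)) le_rfl le_rfl φ x

lemma integrable_one_add_norm_pow_inv [FiniteDimensional ℝ V] [MeasurableSpace V] [BorelSpace V]
    {μ : Measure V} [μ.IsAddHaarMeasure] {M : ℕ} (hM : Module.finrank ℝ V < M) :
    Integrable (fun x : V ↦ ((1 + ‖x‖) ^ M)⁻¹) μ := by
  have hjapanese := integrable_one_add_norm (μ := μ) (r := M) (by exact_mod_cast hM)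
  refine hjapanese.congr (Filter.Eventually.of_forall fun x ↦ ?_)
  simp only [Real.rpow_neg (by positivity : 0 ≤ 1 + ‖x‖), Real.rpow_natCast]

end Decay

section Flatness

open Set LineDeriv

/-- The open set of points all of whose coordinates are nonzero, where the Fourier transform is to
be computed. -/
def coordNeZero (ι : Type*) : Set (EuclideanSpace ℝ ι) := {x | ∀ k, x k ≠ 0}

lemma eq_zero_of_tsupport_subset_coordNeZero {ι F : Type*} [Zero F]
    {f : EuclideanSpace ℝ ι → F} (hf : tsupport f ⊆ coordNeZero ι) {x : EuclideanSpace ℝ ι} {k : ι}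
    (hx : x k = 0) : f x = 0 :=
  image_eq_zero_of_notMem_tsupport fun h ↦ hf h k hx

variable {ι F : Type*} [Fintype ι] [NormedAddCommGroup F] [NormedSpace ℝ F]

lemma hasDerivAt_schwartz_comp_add_smul (φ : SchwartzMap (EuclideanSpace ℝ ι) F)
    (x e : EuclideanSpace ℝ ι) (s : ℝ) :
    HasDerivAt (fun s : ℝ ↦ φ (x + s • e)) (∂_{e} φ (x + s • e)) s := by
  have hline : HasDerivAt (fun s : ℝ ↦ x + s • e) e s := by
    simpa using ((hasDerivAt_id s).smul_const e).const_add x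
  rw [SchwartzMap.lineDerivOp_apply_eq_fderiv]
  exact (φ.differentiableAt (x := x + s • e)).hasFDerivAt.comp_hasDerivAt s hline

open Classical in
lemma norm_le_abs_coord_mul_of_lineDeriv_le {φ : SchwartzMap (EuclideanSpace ℝ ι) F}
    {x : EuclideanSpace ℝ ι} {k : ι} {B : ℝ}
    (hzero : ∀ y : EuclideanSpace ℝ ι, y k = 0 → φ y = 0)
    (hB : ∀ s, |s| ≤ |x k| →
      ‖∂_{EuclideanSpace.single k (1 : ℝ)} φ
        (x - x k • EuclideanSpace.single k 1 + s • EuclideanSpace.single k 1)‖ ≤ B) :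
    ‖φ x‖ ≤ B * |x k| := by
  set e : EuclideanSpace ℝ ι := EuclideanSpace.single k 1 with he
  have hφ : φ (x - x k • e) = 0 := hzero _ (by simp [he])
  simpa [hφ] using Convex.norm_image_sub_le_of_norm_hasDerivWithin_le (s := uIcc 0 (x k))
    (fun s _ ↦ (hasDerivAt_schwartz_comp_add_smul φ (x - x k • e) e s).hasDerivWithinAt)
    (fun s hs ↦ hB s (by simpa using abs_sub_left_of_mem_uIcc hs)) (convex_uIcc 0 (x k))
    left_mem_uIcc right_mem_uIcc

open Classical in
lemma exists_norm_le_mul_prod_abs_coord (s : Multiset ι)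
    {φ : SchwartzMap (EuclideanSpace ℝ ι) F} (hφ : tsupport φ ⊆ coordNeZero ι) :
    ∃ C, 0 ≤ C ∧ ∀ x, ‖φ x‖ ≤ C * (s.map fun k ↦ |x k|).prod := by
  induction s using Multiset.induction_on generalizing φ with
  | empty =>
    obtain ⟨C, hC, hbound⟩ := φ.decay 0 0
    exact ⟨C, hC.le, fun x ↦ by simpa using hbound x⟩
  | cons k s ih =>
    obtain ⟨C, hC, hbound⟩ := ih
      ((SchwartzMap.tsupport_lineDerivOp_subset (EuclideanSpace.single k 1) φ).trans hφ)
    refine ⟨C, hC, fun x ↦ ?_⟩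
    rw [Multiset.map_cons, Multiset.prod_cons, mul_comm |x k|, ← mul_assoc]
    refine norm_le_abs_coord_mul_of_lineDeriv_le
      (fun y ↦ eq_zero_of_tsupport_subset_coordNeZero hφ) fun r hr ↦ (hbound _).trans ?_
    gcongr
    refine Multiset.prod_map_le_prod_map₀ _ _ (fun j _ ↦ abs_nonneg _) fun j _ ↦ ?_
    by_cases hj : j = k <;> simp [hj, hr]

lemma prod_one_add_abs_coord_pow_le (x : EuclideanSpace ℝ ι) (N : ℕ) :
    ∏ k, (1 + |x k|) ^ N ≤ (1 + ‖x‖) ^ (N * Fintype.card ι) := by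
  rw [pow_mul, ← Finset.card_univ, ← Finset.prod_const]
  refine Finset.prod_le_prod (fun k _ ↦ by positivity) fun k _ ↦ ?_
  gcongr
  simpa using PiLp.norm_apply_le x k

lemma exists_norm_le_mul_prod_abs_coord_pow_mul {φ : SchwartzMap (EuclideanSpace ℝ ι) F}
    (hφ : tsupport φ ⊆ coordNeZero ι) (N M : ℕ) :
    ∃ C, 0 ≤ C ∧ ∀ x, ‖φ x‖ ≤ C * (∏ k, |x k| ^ N) * ((1 + ‖x‖) ^ M)⁻¹ := by
  obtain ⟨C, hC, hflat⟩ := exists_norm_le_mul_prod_abs_coord ((2 * N) • Finset.univ.val) hφ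
  obtain ⟨D, hD, hdecay⟩ := exists_norm_schwartz_le_mul_one_add_norm_pow φ (2 * M)
  refine ⟨√(C * D), Real.sqrt_nonneg _, fun x ↦ ?_⟩
  refine le_of_sq_le_sq ?_ (by positivity)
  calc ‖φ x‖ ^ 2 ≤ (C * ((2 * N) • Finset.univ.val |>.map fun k ↦ |x k|).prod)
        * (D * ((1 + ‖x‖) ^ (2 * M))⁻¹) := by
        rw [sq]
        exact mul_le_mul (hflat x) (hdecay x) (norm_nonneg _) ((norm_nonneg _).trans (hflat x))
    _ = _ := by
        rw [Multiset.map_nsmul, Multiset.prod_nsmul, mul_pow, mul_pow, Real.sq_sqrt (by positivity),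
          inv_pow, Finset.prod_pow, pow_mul', pow_mul']
        simp only [Finset.prod_map_val]
        ring

lemma integrable_norm_mul_prod_one_add_inv_pow {φ : SchwartzMap (EuclideanSpace ℝ ι) F}
    (hφ : tsupport φ ⊆ coordNeZero ι) (N : ℕ) :
    Integrable fun x ↦ ‖φ x‖ * ∏ k, (1 + |x k|⁻¹) ^ N := by
  obtain ⟨C, hC, hbound⟩ := exists_norm_le_mul_prod_abs_coord_pow_mul hφ N
    (N * Fintype.card ι + (Fintype.card ι + 1))
  have hfinrank : Module.finrank ℝ (EuclideanSpace ℝ ι) < Fintype.card ι + 1 := by simp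
  refine ((integrable_one_add_norm_pow_inv hfinrank).const_mul C).mono'
    (φ.continuous.norm.measurable.mul (by fun_prop)).aestronglyMeasurable
    (Filter.Eventually.of_forall fun x ↦ ?_)
  rw [Real.norm_of_nonneg (by positivity)]
  have hcoord (k : ι) : |x k| ^ N * (1 + |x k|⁻¹) ^ N ≤ (1 + |x k|) ^ N := by
    rw [← mul_pow, mul_add, mul_one, add_comm]
    gcongr
    exact mul_inv_le_one
  calc ‖φ x‖ * ∏ k, (1 + |x k|⁻¹) ^ N
      ≤ C * (∏ k, |x k| ^ N * (1 + |x k|⁻¹) ^ N)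
        * ((1 + ‖x‖) ^ (N * Fintype.card ι + (Fintype.card ι + 1)))⁻¹ := by
        rw [Finset.prod_mul_distrib, ← mul_assoc, mul_right_comm]
        gcongr
        exact hbound x
    _ ≤ C * (1 + ‖x‖) ^ (N * Fintype.card ι)
        * ((1 + ‖x‖) ^ (N * Fintype.card ι + (Fintype.card ι + 1)))⁻¹ := by
        gcongr
        exact (Finset.prod_le_prod (fun k _ ↦ by positivity) fun k _ ↦ hcoord k).trans
          (prod_one_add_abs_coord_pow_le x N)
    _ = C * ((1 + ‖x‖) ^ (Fintype.card ι + 1))⁻¹ := by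
        rw [pow_add]
        field_simp

end Flatness

section PowerSum

open Set Filter Topology

lemma integrableOn_rpow_mul_one_add_rpow_neg {a b : ℝ} (ha : 0 < a) (hab : a < b) :
    IntegrableOn (fun t : ℝ ↦ t ^ (a - 1) * (1 + t) ^ (-b)) (Ioi 0) := by
  rw [← Ioc_union_Ioi_eq_Ioi zero_le_one]
  refine IntegrableOn.union ?_ ?_
  · have hrpow : IntegrableOn (fun t : ℝ ↦ t ^ (a - 1)) (Ioc 0 1) := by
      rw [← intervalIntegrable_iff_integrableOn_Ioc_of_le zero_le_one]
      exact intervalIntegral.intervalIntegrable_rpow' (by linarith)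
    refine hrpow.mono' (by fun_prop) (ae_restrict_of_forall_mem measurableSet_Ioc fun t ht ↦ ?_)
    have ht0 : 0 < t := ht.1
    rw [Real.norm_of_nonneg (by positivity)]
    exact mul_le_of_le_one_right (by positivity)
      (Real.rpow_le_one_of_one_le_of_nonpos (by linarith) (by linarith))
  · have hrpow : IntegrableOn (fun t : ℝ ↦ t ^ (a - 1 - b)) (Ioi 1) :=
      integrableOn_Ioi_rpow_of_lt (by linarith) one_pos
    refine hrpow.mono' (by fun_prop) (ae_restrict_of_forall_mem measurableSet_Ioi fun t ht ↦ ?_)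
    have ht0 : 0 < t := one_pos.trans ht
    rw [Real.norm_of_nonneg (by positivity), sub_eq_add_neg (a - 1) b, Real.rpow_add ht0]
    exact mul_le_mul_of_nonneg_left
      (Real.rpow_le_rpow_of_nonpos ht0 (by linarith) (by linarith)) (by positivity)

variable {ι : Type*} [Fintype ι] {p : ℝ}

lemma integrable_prod_comp_coord {𝕜 : Type*} [NormedCommRing 𝕜] {f : ι → ℝ → 𝕜}
    (hf : ∀ k, Integrable (f k)) :
    Integrable fun x : EuclideanSpace ℝ ι ↦ ∏ k, f k (x k) :=
  (PiLp.volume_preserving_ofLp ι).integrable_comp_of_integrable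
    (Integrable.fintype_prod (μ := fun _ ↦ volume) hf)

lemma integral_prod_comp_coord {𝕜 : Type*} [RCLike 𝕜] (f : ι → ℝ → 𝕜) :
    ∫ x : EuclideanSpace ℝ ι, ∏ k, f k (x k) = ∏ k, ∫ z, f k z := by
  rw [← integral_fintype_prod_volume_eq_prod]
  exact (PiLp.volume_preserving_ofLp ι).integral_comp
    (MeasurableEquiv.toLp 2 (ι → ℝ)).symm.measurableEmbedding fun y ↦ ∏ k, f k (y k)

lemma ae_mem_coordNeZero : ∀ᵐ x : EuclideanSpace ℝ ι, x ∈ coordNeZero ι :=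
  (PiLp.volume_preserving_ofLp ι).quasiMeasurePreserving.ae
    (ae_all_iff.2 fun k ↦ Measure.ae_eval_ne _ k 0)

/-- The sum `|x₁|^p + ⋯ + |x_n|^p`, that is, the `p`-th power of the `ℓ^p` quasi-norm of `x`. -/
def sumAbsRpow (p : ℝ) (x : EuclideanSpace ℝ ι) : ℝ := ∑ k, |x k| ^ p

lemma sumAbsRpow_nonneg (p : ℝ) (x : EuclideanSpace ℝ ι) : 0 ≤ sumAbsRpow p x :=
  Finset.sum_nonneg fun _ _ ↦ by positivity

lemma continuous_sumAbsRpow (hp : 0 ≤ p) : Continuous (sumAbsRpow (ι := ι) p) :=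
  continuous_finsetSum _ fun k _ ↦
    (Real.continuous_rpow_const hp).comp (EuclideanSpace.proj (𝕜 := ℝ) k).continuous.abs

lemma abs_coord_rpow_le_sumAbsRpow (p : ℝ) (x : EuclideanSpace ℝ ι) (k : ι) :
    |x k| ^ p ≤ sumAbsRpow p x :=
  Finset.single_le_sum (f := fun k ↦ |x k| ^ p) (fun _ _ ↦ by positivity) (Finset.mem_univ k)

lemma sumAbsRpow_pos [Nonempty ι] {x : EuclideanSpace ℝ ι} (hx : x ∈ coordNeZero ι) :
    0 < sumAbsRpow p x :=
  (Real.rpow_pos_of_pos (abs_pos.2 (hx (Classical.arbitrary ι))) p).trans_le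
    (abs_coord_rpow_le_sumAbsRpow p x _)

lemma sumAbsRpow_le (hp : 0 ≤ p) (x : EuclideanSpace ℝ ι) :
    sumAbsRpow p x ≤ Fintype.card ι * (1 + ‖x‖) ^ p := by
  rw [← nsmul_eq_mul, ← Finset.card_univ]
  refine Finset.sum_le_card_nsmul _ _ _ fun k _ ↦ ?_
  gcongr
  have hcoord := PiLp.norm_apply_le x k
  rw [Real.norm_eq_abs] at hcoord
  linarith

lemma sumAbsRpow_rpow_le_mul_one_add_norm_pow (hp : 0 ≤ p) {s : ℝ} (hs : 0 ≤ s)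
    (x : EuclideanSpace ℝ ι) :
    sumAbsRpow p x ^ s ≤ Fintype.card ι ^ s * (1 + ‖x‖) ^ ⌈p * s⌉₊ := by
  calc sumAbsRpow p x ^ s ≤ (Fintype.card ι * (1 + ‖x‖) ^ p) ^ s :=
        Real.rpow_le_rpow (sumAbsRpow_nonneg p x) (sumAbsRpow_le hp x) hs
    _ = Fintype.card ι ^ s * (1 + ‖x‖) ^ (p * s) := by
        rw [Real.mul_rpow (by positivity) (by positivity), ← Real.rpow_mul (by positivity)]
    _ ≤ Fintype.card ι ^ s * (1 + ‖x‖) ^ ⌈p * s⌉₊ := by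
        rw [← Real.rpow_natCast (1 + ‖x‖)]
        gcongr
        · linarith [norm_nonneg x]
        · exact Nat.le_ceil _

lemma sumAbsRpow_rpow_le_prod [Nonempty ι] {s : ℝ} (hs : s ≤ 0) {x : EuclideanSpace ℝ ι}
    (hx : x ∈ coordNeZero ι) :
    sumAbsRpow p x ^ s ≤ ∏ k, |x k| ^ (p * s / Fintype.card ι) := by
  have hcard : (0 : ℝ) < Fintype.card ι := mod_cast Fintype.card_pos
  calc sumAbsRpow p x ^ s = ∏ _k : ι, sumAbsRpow p x ^ (s / Fintype.card ι) := by
        rw [Finset.prod_const, Finset.card_univ, ← Real.rpow_mul_natCast (sumAbsRpow_nonneg p x),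
          div_mul_cancel₀ s hcard.ne']
    _ ≤ ∏ k, (|x k| ^ p) ^ (s / Fintype.card ι) :=
        Finset.prod_le_prod (fun _ _ ↦ Real.rpow_nonneg (sumAbsRpow_nonneg p x) _) fun k _ ↦
          Real.rpow_le_rpow_of_nonpos (Real.rpow_pos_of_pos (abs_pos.2 (hx k)) p)
            (abs_coord_rpow_le_sumAbsRpow p x k) (div_nonpos_of_nonpos_of_nonneg hs hcard.le)
    _ = ∏ k, |x k| ^ (p * s / Fintype.card ι) := by
        simp only [← Real.rpow_mul (abs_nonneg _), mul_div_assoc]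

lemma aestronglyMeasurable_sumAbsRpow_rpow_smul {F : Type*} [NormedAddCommGroup F]
    [NormedSpace ℝ F] (hp : 0 ≤ p) (s : ℝ) (ψ : SchwartzMap (EuclideanSpace ℝ ι) F) :
    AEStronglyMeasurable fun x ↦ sumAbsRpow p x ^ s • ψ x :=
  ((continuous_sumAbsRpow hp).measurable.pow_const s).aestronglyMeasurable.smul
    ψ.continuous.aestronglyMeasurable

lemma integrable_sumAbsRpow_rpow_smul_of_nonneg {F : Type*} [NormedAddCommGroup F]
    [NormedSpace ℝ F] (hp : 0 ≤ p) {s : ℝ} (hs : 0 ≤ s)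
    (ψ : SchwartzMap (EuclideanSpace ℝ ι) F) :
    Integrable fun x ↦ sumAbsRpow p x ^ s • ψ x := by
  obtain ⟨C, -, hψ⟩ := exists_norm_schwartz_le_mul_one_add_norm_pow ψ
    (⌈p * s⌉₊ + (Fintype.card ι + 1))
  have hfinrank : Module.finrank ℝ (EuclideanSpace ℝ ι) < Fintype.card ι + 1 := by simp
  refine ((integrable_one_add_norm_pow_inv hfinrank).const_mul (Fintype.card ι ^ s * C)).mono'
    (aestronglyMeasurable_sumAbsRpow_rpow_smul hp s ψ) (Eventually.of_forall fun x ↦ ?_)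
  rw [norm_smul, Real.norm_of_nonneg (Real.rpow_nonneg (sumAbsRpow_nonneg p x) s)]
  calc sumAbsRpow p x ^ s * ‖ψ x‖
      ≤ (Fintype.card ι ^ s * (1 + ‖x‖) ^ ⌈p * s⌉₊)
        * (C * ((1 + ‖x‖) ^ (⌈p * s⌉₊ + (Fintype.card ι + 1)))⁻¹) := by
        gcongr
        exacts [sumAbsRpow_rpow_le_mul_one_add_norm_pow hp hs x, hψ x]
    _ = Fintype.card ι ^ s * C * ((1 + ‖x‖) ^ (Fintype.card ι + 1))⁻¹ := by
        rw [pow_add (1 + ‖x‖) ⌈p * s⌉₊]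
        field_simp

lemma integrable_sumAbsRpow_rpow_smul_of_neg [Nonempty ι] {F : Type*} [NormedAddCommGroup F]
    [NormedSpace ℝ F] (hp : 0 < p) {s : ℝ} (hs : s < 0) (hsn : -(Fintype.card ι : ℝ) < p * s)
    (ψ : SchwartzMap (EuclideanSpace ℝ ι) F) :
    Integrable fun x ↦ sumAbsRpow p x ^ s • ψ x := by
  have hcard : (0 : ℝ) < Fintype.card ι := mod_cast Fintype.card_pos
  set a := p * s / Fintype.card ι with ha
  have ha0 : a < 0 := div_neg_of_neg_of_pos (mul_neg_of_pos_of_neg hp hs) hcard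
  have ha1 : -1 < a := by rw [ha, lt_div_iff₀ hcard]; linarith
  obtain ⟨C, hC, hψ⟩ := exists_norm_schwartz_le_mul_one_add_norm_pow ψ (2 * Fintype.card ι)
  have hcoord : Integrable fun z : ℝ ↦ |z| ^ a * ((1 + |z|) ^ 2)⁻¹ := by
    have hhalf := integrable_comp_abs_of_integrableOn_Ioi
      (integrableOn_rpow_mul_one_add_rpow_neg (a := a + 1) (b := 2) (by linarith) (by linarith))
    refine hhalf.congr (Eventually.of_forall fun z ↦ ?_)
    simp only [add_sub_cancel_right, Real.rpow_neg (by positivity : 0 ≤ 1 + |z|), Real.rpow_two]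
  refine ((integrable_prod_comp_coord fun _ ↦ hcoord).const_mul C).mono'
    (aestronglyMeasurable_sumAbsRpow_rpow_smul hp.le s ψ) ?_
  filter_upwards [ae_mem_coordNeZero] with x hx
  rw [norm_smul, Real.norm_of_nonneg (Real.rpow_nonneg (sumAbsRpow_nonneg p x) s)]
  calc sumAbsRpow p x ^ s * ‖ψ x‖
      ≤ (∏ k, |x k| ^ a) * (C * ((1 + ‖x‖) ^ (2 * Fintype.card ι))⁻¹) := by
        gcongr
        exacts [sumAbsRpow_rpow_le_prod hs.le hx, hψ x]
    _ ≤ (∏ k, |x k| ^ a) * (C * (∏ k, (1 + |x k|) ^ 2)⁻¹) := by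
        gcongr
        exact prod_one_add_abs_coord_pow_le x 2
    _ = C * ∏ k, |x k| ^ a * ((1 + |x k|) ^ 2)⁻¹ := by
        rw [Finset.prod_mul_distrib, Finset.prod_inv_distrib]
        ring

theorem integrable_sumAbsRpow_rpow_smul [Nonempty ι] {F : Type*} [NormedAddCommGroup F]
    [NormedSpace ℝ F] (hp : 0 < p) {s : ℝ} (hsn : -(Fintype.card ι : ℝ) < p * s)
    (ψ : SchwartzMap (EuclideanSpace ℝ ι) F) :
    Integrable fun x ↦ sumAbsRpow p x ^ s • ψ x :=
  (le_or_gt 0 s).elim (fun hs ↦ integrable_sumAbsRpow_rpow_smul_of_nonneg hp.le hs ψ)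
    fun hs ↦ integrable_sumAbsRpow_rpow_smul_of_neg hp hs hsn ψ

end PowerSum

section FourierTransform

open FourierTransform

variable {n : ℕ} {p t : ℝ}

lemma ftNU_eq_fourierIntegral_probChar (f : EuclideanSpace ℝ (Fin n) → ℂ) :
    ftNU f = VectorFourier.fourierIntegral Real.probChar volume
      (innerₗ (EuclideanSpace ℝ (Fin n))) f := by
  ext ξ
  rw [VectorFourier.fourierIntegral_probChar, ftNU]
  congr 1 with x
  rw [smul_eq_mul, innerₗ_apply_apply, neg_mul, neg_mul, mul_comm Complex.I]

lemma integral_ftNU_mul_eq_integral_mul_ftNU {f g : EuclideanSpace ℝ (Fin n) → ℂ}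
    (hf : Integrable f) (hg : Integrable g) : ∫ ξ, ftNU f ξ * g ξ = ∫ x, f x * ftNU g x := by
  simpa [ftNU_eq_fourierIntegral_probChar] using
    VectorFourier.integral_fourierIntegral_smul_eq_flip (L := innerₗ (EuclideanSpace ℝ (Fin n)))
      Real.continuous_probChar continuous_inner hf hg

lemma exists_schwartzMap_coe_eq_ftNU (φ : SchwartzMap (EuclideanSpace ℝ (Fin n)) ℂ) :
    ∃ ψ : SchwartzMap (EuclideanSpace ℝ (Fin n)) ℂ, ⇑ψ = ftNU φ := by
  have hscale : (2 * π)⁻¹ ≠ 0 := by positivity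
  refine ⟨SchwartzMap.compCLMOfContinuousLinearEquiv ℂ
    (ContinuousLinearEquiv.smulLeft (Units.mk0 _ hscale)) (𝓕 φ), funext fun ξ ↦ ?_⟩
  rw [SchwartzMap.compCLMOfContinuousLinearEquiv_apply, Function.comp_apply,
    SchwartzMap.fourier_coe, Real.fourier_eq', ftNU]
  congr 1 with x
  rw [smul_eq_mul, ContinuousLinearEquiv.smulLeft_apply_apply, Units.smul_mk0,
    inner_smul_right]
  congr 2
  push_cast
  field_simp

open Complex

lemma abs_div_rpow_eq (ht : 0 < t) (p z : ℝ) : |z / t| ^ p = t ^ (-p) * |z| ^ p := by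
  rw [abs_div, abs_of_pos ht, Real.div_rpow (abs_nonneg _) ht.le, Real.rpow_neg ht.le,
    div_eq_inv_mul]

lemma integral_cexp_mul_exp_neg_abs_rpow (hp : 0 < p) (ξ : ℝ) :
    ∫ z : ℝ, cexp (-I * (z * ξ : ℝ)) * (Real.exp (-|z| ^ p) : ℂ) = gammaP p ξ := by
  set f : ℝ → ℂ := fun z ↦ cexp (-I * (z * ξ : ℝ)) * (Real.exp (-|z| ^ p) : ℂ) with hf
  have hint : Integrable f := by
    refine (integrable_exp_neg_abs_rpow hp).mono' (Measurable.aestronglyMeasurable (by fun_prop))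
      (Filter.Eventually.of_forall fun z ↦ ?_)
    simp [hf, norm_exp]
  have hconj : starRingEnd ℂ (∫ z, f z) = ∫ z, f z := by
    rw [← integral_conj, ← integral_neg_eq_self]
    simp [hf, ← exp_conj]
  rw [← conj_eq_iff_re.1 hconj]
  congr 1
  refine (reCLM.integral_comp_comm hint).symm.trans ?_
  refine integral_congr_ae (Filter.Eventually.of_forall fun z ↦ ?_)
  simp only [hf, reCLM_apply, re_mul_ofReal]
  simp [exp_re, mul_comm]

lemma integral_cexp_mul_exp_neg_mul_abs_rpow (hp : 0 < p) (ht : 0 < t) (ξ : ℝ) :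
    ∫ z : ℝ, cexp (-I * (z * ξ : ℝ)) * (Real.exp (-(t ^ (-p) * |z| ^ p)) : ℂ)
      = (t * gammaP p (t * ξ) : ℝ) := by
  have hscale := Measure.integral_comp_div
    (fun z : ℝ ↦ cexp (-I * (z * (t * ξ) : ℝ)) * (Real.exp (-|z| ^ p) : ℂ)) t
  have hcancel (z : ℝ) : z / t * (t * ξ) = z * ξ := by field_simp
  rw [integral_cexp_mul_exp_neg_abs_rpow hp, abs_of_pos ht] at hscale
  simpa only [abs_div_rpow_eq ht, hcancel, real_smul, ← ofReal_mul] using hscale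

lemma exp_neg_mul_sumAbsRpow {ι : Type*} [Fintype ι] (c p : ℝ) (x : EuclideanSpace ℝ ι) :
    Real.exp (-(c * sumAbsRpow p x)) = ∏ k, Real.exp (-(c * |x k| ^ p)) := by
  rw [← Real.exp_sum, Finset.sum_neg_distrib, sumAbsRpow, Finset.mul_sum]

lemma integrable_exp_neg_mul_sumAbsRpow {ι : Type*} [Fintype ι] (hp : 0 < p) (ht : 0 < t) :
    Integrable fun x : EuclideanSpace ℝ ι ↦ Real.exp (-(t ^ (-p) * sumAbsRpow p x)) := by
  simp only [exp_neg_mul_sumAbsRpow, ← abs_div_rpow_eq ht]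
  exact integrable_prod_comp_coord fun _ ↦ (integrable_exp_neg_abs_rpow hp).comp_div ht.ne'

lemma ftNU_exp_neg_mul_sumAbsRpow (hp : 0 < p) (ht : 0 < t) (ξ : EuclideanSpace ℝ (Fin n)) :
    ftNU (fun x ↦ (Real.exp (-(t ^ (-p) * sumAbsRpow p x)) : ℂ)) ξ
      = (t ^ n * ∏ k, gammaP p (t * ξ k) : ℝ) := by
  have hsplit (x : EuclideanSpace ℝ (Fin n)) : cexp (-I * (⟪x, ξ⟫ : ℂ))
      * (Real.exp (-(t ^ (-p) * sumAbsRpow p x)) : ℂ)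
      = ∏ k, cexp (-I * (x k * ξ k : ℝ)) * (Real.exp (-(t ^ (-p) * |x k| ^ p)) : ℂ) := by
    rw [Finset.prod_mul_distrib, exp_neg_mul_sumAbsRpow, ofReal_prod, ← Complex.exp_sum,
      ← Finset.mul_sum, PiLp.inner_apply]
    simp [mul_comm]
  simp only [ftNU, hsplit]
  refine (integral_prod_comp_coord fun k z ↦ cexp (-I * (z * ξ k : ℝ))
    * (Real.exp (-(t ^ (-p) * |z| ^ p)) : ℂ)).trans ?_
  simp only [integral_cexp_mul_exp_neg_mul_abs_rpow hp ht, ← ofReal_prod, Finset.prod_mul_distrib,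
    Finset.prod_const, Finset.card_univ, Fintype.card_fin]

lemma integral_exp_neg_mul_sumAbsRpow_smul_ftNU (hp : 0 < p) (ht : 0 < t)
    {φ : EuclideanSpace ℝ (Fin n) → ℂ} (hφ : Integrable φ) :
    ∫ x, Real.exp (-(t ^ (-p) * sumAbsRpow p x)) • ftNU φ x
      = t ^ n • ∫ ξ, (∏ k, gammaP p (t * ξ k)) • φ ξ := by
  simp only [← integral_smul, smul_smul]
  simp only [real_smul, ← ftNU_exp_neg_mul_sumAbsRpow hp ht]
  exact (integral_ftNU_mul_eq_integral_mul_ftNU (integrable_exp_neg_mul_sumAbsRpow hp ht).ofReal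
    hφ).symm

end FourierTransform

section Kernel

open Set Filter

variable {p β : ℝ}

lemma one_add_abs_mul_rpow_neg_le {t x b : ℝ} (ht : 0 ≤ t) (hx : x ≠ 0) (hb : 0 ≤ b) :
    (1 + |t * x|) ^ (-b) ≤ (1 + t) ^ (-b) * (1 + |x|⁻¹) ^ ⌈b⌉₊ := by
  have : 0 < |x| := abs_pos.2 hx
  have hbase : (1 + t) * (1 + |x|⁻¹)⁻¹ ≤ 1 + |t * x| := by
    rw [← div_eq_mul_inv, div_le_iff₀ (by positivity), abs_mul, abs_of_nonneg ht]
    have hexpand : (1 + t * |x|) * (1 + |x|⁻¹) = 1 + t + (|x|⁻¹ + t * |x|) := by field_simp; ring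
    rw [hexpand]
    exact le_add_of_nonneg_right (by positivity)
  calc (1 + |t * x|) ^ (-b) ≤ ((1 + t) * (1 + |x|⁻¹)⁻¹) ^ (-b) :=
        Real.rpow_le_rpow_of_nonpos (by positivity) hbase (by linarith)
    _ = (1 + t) ^ (-b) * (1 + |x|⁻¹) ^ b := by
        rw [Real.mul_rpow (by positivity) (by positivity), Real.inv_rpow (by positivity),
          Real.rpow_neg (by positivity) b, Real.rpow_neg (by positivity) b, inv_inv]
    _ ≤ (1 + t) ^ (-b) * (1 + |x|⁻¹) ^ ⌈b⌉₊ := by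
        rw [← Real.rpow_natCast (1 + |x|⁻¹)]
        gcongr
        · exact le_add_of_nonneg_right (by positivity)
        · exact Nat.le_ceil b

lemma exists_abs_prod_gammaP_le (ι : Type*) [Fintype ι] (hp : 0 < p) :
    ∃ C, 0 ≤ C ∧ ∀ t : ℝ, 0 ≤ t → ∀ ξ ∈ coordNeZero ι, |∏ k, gammaP p (t * ξ k)|
      ≤ C * (1 + t) ^ (-(Fintype.card ι * (1 + p))) * ∏ k, (1 + |ξ k|⁻¹) ^ ⌈1 + p⌉₊ := by
  obtain ⟨C, hC, hγ⟩ := exists_abs_gammaP_le_mul_one_add_abs_rpow hp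
  refine ⟨C ^ Fintype.card ι, by positivity, fun t ht ξ hξ ↦ ?_⟩
  calc |∏ k, gammaP p (t * ξ k)|
      ≤ ∏ k, C * ((1 + t) ^ (-(1 + p)) * (1 + |ξ k|⁻¹) ^ ⌈1 + p⌉₊) := by
        rw [Finset.abs_prod]
        refine Finset.prod_le_prod (fun k _ ↦ abs_nonneg _) fun k _ ↦ (hγ _).trans ?_
        gcongr
        exact one_add_abs_mul_rpow_neg_le ht (hξ k) (by linarith)
    _ = _ := by
        have hpow : ((1 + t) ^ (-(1 + p))) ^ Fintype.card ι
            = (1 + t) ^ (-(Fintype.card ι * (1 + p))) := by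
          rw [← Real.rpow_mul_natCast (by positivity)]
          congr 1
          ring
        rw [Finset.prod_mul_distrib, Finset.prod_mul_distrib, Finset.prod_const, Finset.prod_const,
          Finset.card_univ, hpow, mul_assoc]

theorem integrableOn_rpow_mul_prod_gammaP {ι : Type*} [Fintype ι] (hp : 0 < p)
    (hβ : -(Fintype.card ι : ℝ) < β) (hβp : β < p * Fintype.card ι) {ξ : EuclideanSpace ℝ ι}
    (hξ : ξ ∈ coordNeZero ι) :
    IntegrableOn (fun t : ℝ ↦ t ^ (Fintype.card ι + β - 1) * ∏ k, gammaP p (t * ξ k)) (Ioi 0) := by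
  obtain ⟨C, -, hγ⟩ := exists_abs_prod_gammaP_le ι hp
  have hcont := continuous_gammaP hp
  refine ((integrableOn_rpow_mul_one_add_rpow_neg (b := Fintype.card ι * (1 + p))
    (by linarith : 0 < Fintype.card ι + β) (by linarith)).const_mul
      (C * ∏ k, (1 + |ξ k|⁻¹) ^ ⌈1 + p⌉₊)).mono'
    (Measurable.aestronglyMeasurable (by fun_prop)) ?_
  refine ae_restrict_of_forall_mem measurableSet_Ioi fun t (ht : 0 < t) ↦ ?_
  rw [norm_mul, Real.norm_of_nonneg (by positivity), Real.norm_eq_abs]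
  refine (mul_le_mul_of_nonneg_left (hγ t ht.le ξ hξ) (by positivity)).trans_eq ?_
  ring

variable {n : ℕ} {φ : SchwartzMap (EuclideanSpace ℝ (Fin n)) ℂ}

lemma integrable_rpow_mul_prod_gammaP_smul (hp : 0 < p) (hβ : -(n : ℝ) < β) (hβp : β < p * n)
    (hφ : tsupport φ ⊆ coordNeZero (Fin n)) :
    Integrable (Function.uncurry fun (t : ℝ) (ξ : EuclideanSpace ℝ (Fin n)) ↦
      (t ^ (n + β - 1) * ∏ k, gammaP p (t * ξ k)) • φ ξ)
      ((volume.restrict (Ioi 0)).prod volume) := by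
  obtain ⟨C, -, hγ⟩ := exists_abs_prod_gammaP_le (Fin n) hp
  have hcont := continuous_gammaP hp
  have hφcont := φ.continuous
  refine ((integrableOn_rpow_mul_one_add_rpow_neg (b := n * (1 + p)) (by linarith : 0 < n + β)
    (by linarith)).integrable.mul_prod
      ((integrable_norm_mul_prod_one_add_inv_pow hφ ⌈1 + p⌉₊).const_mul C)).mono'
    (Measurable.aestronglyMeasurable (by fun_prop)) ?_
  filter_upwards [Measure.quasiMeasurePreserving_fst.ae (ae_restrict_mem measurableSet_Ioi)]
    with ⟨t, ξ⟩ (ht : 0 < t)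
  simp only [Function.uncurry_apply_pair]
  by_cases hzero : φ ξ = 0
  · simp [hzero]
  have hbound := hγ t ht.le ξ (hφ (subset_tsupport _ hzero))
  rw [Fintype.card_fin] at hbound
  rw [norm_smul, norm_mul, Real.norm_of_nonneg (by positivity), Real.norm_eq_abs]
  calc t ^ (n + β - 1) * |∏ k, gammaP p (t * ξ k)| * ‖φ ξ‖
      ≤ t ^ (n + β - 1) * (C * (1 + t) ^ (-(n * (1 + p))) * ∏ k, (1 + |ξ k|⁻¹) ^ ⌈1 + p⌉₊)
        * ‖φ ξ‖ := by gcongr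
    _ = _ := by ring

lemma integral_Ioi_rpow_smul_integral_prod_gammaP_smul (hp : 0 < p) (hβ : -(n : ℝ) < β)
    (hβp : β < p * n) (hφ : tsupport φ ⊆ coordNeZero (Fin n)) :
    ∫ t in Ioi (0 : ℝ), t ^ (n + β - 1) • ∫ ξ, (∏ k, gammaP p (t * ξ k)) • φ ξ
      = ∫ ξ, (∫ t in Ioi (0 : ℝ), t ^ (n + β - 1) * ∏ k, gammaP p (t * ξ k)) • φ ξ := by
  simp only [← integral_smul, smul_smul, ← integral_smul_const]
  exact integral_integral_swap (integrable_rpow_mul_prod_gammaP_smul hp hβ hβp hφ)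

lemma pow_mul_one_add_rpow_neg_le {t : ℝ} (ht : 0 < t) (hp : 0 ≤ p) (n : ℕ) :
    t ^ n * (1 + t) ^ (-(n * (1 + p))) ≤ (t ^ (-p)) ^ n := by
  calc t ^ n * (1 + t) ^ (-(n * (1 + p))) ≤ t ^ n * t ^ (-(n * (1 + p))) :=
        mul_le_mul_of_nonneg_left (Real.rpow_le_rpow_of_nonpos ht (by linarith)
          (neg_nonpos.2 (by positivity))) (by positivity)
    _ = (t ^ (-p)) ^ n := by
        rw [← Real.rpow_natCast, ← Real.rpow_add ht, ← Real.rpow_mul_natCast ht.le]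
        congr 1
        ring

theorem exists_norm_integral_exp_neg_mul_sumAbsRpow_smul_ftNU_le (hp : 0 < p)
    (hφ : tsupport φ ⊆ coordNeZero (Fin n)) :
    ∃ K, ∀ u : ℝ, 0 < u → ‖∫ x, Real.exp (-(u * sumAbsRpow p x)) • ftNU φ x‖ ≤ K * u ^ n := by
  obtain ⟨C, hC, hγ⟩ := exists_abs_prod_gammaP_le (Fin n) hp
  have hweight := integrable_norm_mul_prod_one_add_inv_pow hφ ⌈1 + p⌉₊
  set W := ∫ ξ, ‖φ ξ‖ * ∏ k, (1 + |ξ k|⁻¹) ^ ⌈1 + p⌉₊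
  have : 0 ≤ W := integral_nonneg fun ξ ↦ by positivity
  refine ⟨C * W, fun u hu ↦ ?_⟩
  obtain ⟨t, ht, rfl⟩ : ∃ t : ℝ, 0 < t ∧ t ^ (-p) = u :=
    ⟨u ^ (-p)⁻¹, Real.rpow_pos_of_pos hu _, Real.rpow_inv_rpow hu.le (neg_ne_zero.2 hp.ne')⟩
  have hker : ‖∫ ξ, (∏ k, gammaP p (t * ξ k)) • φ ξ‖ ≤ C * (1 + t) ^ (-(n * (1 + p))) * W := by
    rw [← integral_const_mul]
    refine norm_integral_le_of_norm_le (hweight.const_mul _) (Eventually.of_forall fun ξ ↦ ?_)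
    by_cases hzero : φ ξ = 0
    · simp [hzero]
    have hbound := hγ t ht.le ξ (hφ (subset_tsupport _ hzero))
    rw [Fintype.card_fin] at hbound
    rw [norm_smul, Real.norm_eq_abs, mul_left_comm, mul_comm |_|]
    gcongr
  rw [integral_exp_neg_mul_sumAbsRpow_smul_ftNU hp ht φ.integrable, norm_smul,
    Real.norm_of_nonneg (by positivity)]
  calc t ^ n * ‖∫ ξ, (∏ k, gammaP p (t * ξ k)) • φ ξ‖
      ≤ t ^ n * (C * (1 + t) ^ (-(n * (1 + p))) * W) := by gcongr
    _ = C * W * (t ^ n * (1 + t) ^ (-(n * (1 + p)))) := by ring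
    _ ≤ C * W * (t ^ (-p)) ^ n := by
        gcongr
        exact pow_mul_one_add_rpow_neg_le ht hp.le n

theorem integral_Ioi_rpow_smul_integral_exp_neg_mul_sumAbsRpow_smul_ftNU (hp : 0 < p) (β : ℝ)
    {φ : EuclideanSpace ℝ (Fin n) → ℂ} (hφ : Integrable φ) :
    ∫ u in Ioi (0 : ℝ), u ^ (-1 - β / p) • ∫ x, Real.exp (-(u * sumAbsRpow p x)) • ftNU φ x
      = p • ∫ t in Ioi (0 : ℝ), t ^ (n + β - 1) • ∫ ξ, (∏ k, gammaP p (t * ξ k)) • φ ξ := by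
  rw [← integral_comp_rpow_Ioi _ (neg_ne_zero.2 hp.ne'), ← integral_smul]
  refine setIntegral_congr_fun measurableSet_Ioi fun t (ht : 0 < t) ↦ ?_
  have hexponent : t ^ (-p - 1) * (t ^ (-p)) ^ (-1 - β / p) * t ^ n = t ^ (n + β - 1) := by
    rw [← Real.rpow_mul ht.le, ← Real.rpow_natCast, ← Real.rpow_add ht, ← Real.rpow_add ht]
    congr 1
    field_simp
    ring
  simp only [integral_exp_neg_mul_sumAbsRpow_smul_ftNU hp ht hφ, abs_neg, abs_of_pos hp, smul_smul,
    ← hexponent, mul_assoc]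

end Kernel

/-- Lemma 6: for `p > 0`, `-n < β < pn` with `β/p` not a non-negative
integer, and `ξ` with all coordinates nonzero, the distributional Fourier transform of
`x ↦ (|x₁|^p + ⋯ + |x_n|^p)^{β/p}` coincides near `ξ` (i.e. on the open set of points with
all coordinates nonzero) with
`(p/Γ(-β/p)) ∫₀^∞ t^{n+β-1} ∏ γ_p(t ξ_k) dt`, and this integral converges. -/
theorem statement15 (p : ℝ) (hp : 0 < p) (n : ℕ) (hn : 1 ≤ n) (β : ℝ)
    (hβ1 : -(n : ℝ) < β) (hβ2 : β < p * n) (hβ3 : ∀ m : ℕ, β / p ≠ (m : ℝ))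
    (ξ : EuclideanSpace ℝ (Fin n)) (hξ : ∀ k, ξ k ≠ 0) :
    IntegrableOn
      (fun t : ℝ => t ^ ((n : ℝ) + β - 1) * ∏ k, gammaP p (t * ξ k)) (Set.Ioi 0)
    ∧ (∀ φ : SchwartzMap (EuclideanSpace ℝ (Fin n)) ℂ,
        tsupport ⇑φ ⊆ {x : EuclideanSpace ℝ (Fin n) | ∀ k, x k ≠ 0} →
        ∫ x, (((∑ k, |x k| ^ p) ^ (β / p) : ℝ) : ℂ) * ftNU ⇑φ x
          = ∫ x, ((p / Real.Gamma (-β / p)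
              * ∫ t in Set.Ioi (0 : ℝ),
                  t ^ ((n : ℝ) + β - 1) * ∏ k, gammaP p (t * x k) : ℝ) : ℂ) * φ x) := by
  have : Nonempty (Fin n) := ⟨⟨0, hn⟩⟩
  refine ⟨by simpa using integrableOn_rpow_mul_prod_gammaP hp (by simpa) (by simpa) hξ,
    fun φ hφ ↦ ?_⟩
  obtain ⟨ψ, hψ⟩ := exists_schwartzMap_coe_eq_ftNU φ
  obtain ⟨K, hK⟩ := exists_norm_integral_exp_neg_mul_sumAbsRpow_smul_ftNU_le hp hφ
  have hrpow {s : ℝ} (hs : -(n : ℝ) < p * s) :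
      Integrable fun x ↦ sumAbsRpow p x ^ s • ftNU φ x := by
    simpa only [hψ] using integrable_sumAbsRpow_rpow_smul hp (by simpa) ψ
  have hpow (j : ℕ) : Integrable fun x ↦ sumAbsRpow p x ^ j • ftNU φ x := by
    have hj : -(n : ℝ) < p * j := (neg_lt_zero.2 (Nat.cast_pos.2 hn)).trans_le (by positivity)
    simpa only [Real.rpow_natCast] using hrpow hj
  have hmain := Gamma_smul_integral_rpow_smul hβ3 ((div_lt_iff₀' hp).2 hβ2) (sumAbsRpow_nonneg p)
    (continuous_sumAbsRpow hp.le).aestronglyMeasurable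
    (ae_mem_coordNeZero.mono fun _ hx ↦ sumAbsRpow_pos hx)
    (hrpow (by rwa [mul_div_cancel₀ β hp.ne'])) (fun j _ ↦ hpow j) hK
  rw [integral_Ioi_rpow_smul_integral_exp_neg_mul_sumAbsRpow_smul_ftNU hp β φ.integrable,
    integral_Ioi_rpow_smul_integral_prod_gammaP_smul hp hβ1 hβ2 hφ] at hmain
  have hΓ : Real.Gamma (-(β / p)) ≠ 0 := Real.Gamma_ne_zero fun m h ↦ hβ3 m (neg_inj.1 h)
  rw [← eq_inv_smul_iff₀ hΓ, smul_smul, ← div_eq_inv_mul, ← integral_smul] at hmain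
  simpa only [neg_div, ← Complex.real_smul, mul_smul, sumAbsRpow] using hmain

end
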